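/- Let U be a bounded connected open set in ℂ^m. Then there exists an injective holomorphic map F : B^m(0,1) → U from the open unit ball of ℂ^m into U such that the complement U \ F(B^m(0,1)) has Lebesgue measure zero. -/

import Mathlib

/-!
The map is the limit of a sequence of holomorphic embeddings `f k` of slightly growing balls, whose
compact images `T k` increase and swallow `U` up to a null set.

*One step.* Let `T = f '' closedBall 0 1` and let `y` be a point at distance `ρ > 0` from `T`, with
nearest point `f x`, `‖x‖ = 1`. The unit vector `n` from `f x` to `y` is a normal: `⟪n, f'(x) v⟫` is
a positive multiple of `⟪x, v⟫` (`exists_nearest`). By polar decomposition there is a unitary `M`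
with `M x = n` for which `M⁻¹ f'(x)` is coercive on the complex hyperplane orthogonal to `x`
(`exists_unitary`). With `u = 1 + β - ⟪x, z⟫` and `z'` the component of `z` orthogonal to `x`, add to
`f` the spike `η (u^(-1/2) n + (2u)⁻¹ M z')`, where `β = 8 η² / ρ²` and `η` is small. Away from `x`
the spike is negligible. Near `x` it grows in a direction compatible with `f'(x)`, so that the
sum keeps a lower Lipschitz bound independent of `η` (`near_estimate`); its values fill a
horn inside `closedBall y ρ` (`spike_mem_horn`), which meets `T` only at `f x`, so the new map is
injective (`core_perturb`). Its image contains a ball of radius `ρ / 120` inside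
`closedBall y ρ`, because the spike can be inverted explicitly there (`core_fill`).

*Iteration.* At each step `y` is taken with `closedBall y ρ ⊆ U` and `ρ` almost maximal, and the
perturbation is so small that injectivity, the inclusion in `U` and the covering of the
earlier images survive in the limit (`stability`, `exists_limit`). The absorbed balls are
disjoint and of radius comparable to `ρ k`, so the measures of the balls
`closedBall (y k) (4 * ρ k)` are summable and `ρ k → 0`; connectedness of `U` makes the images dense
in `U`, and Borel–Cantelli shows that the uncovered part of `U` is null
(`measure_diff_iUnion_eq_zero`).
-/

open Metric MeasureTheory

noncomputable instance {m : ℕ} : MeasurableSpace (EuclideanSpace ℂ (Fin m)) := borel _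
instance {m : ℕ} : BorelSpace (EuclideanSpace ℂ (Fin m)) := ⟨rfl⟩
noncomputable instance {m : ℕ} : InnerProductSpace ℝ (EuclideanSpace ℂ (Fin m)) :=
  InnerProductSpace.rclikeToReal ℂ _

/-- Lebesgue measure on `ℂ^m ≅ ℝ^{2m}`, as the Haar measure normalized on a real
orthonormal parallelepiped. -/
noncomputable instance {m : ℕ} : MeasureSpace (EuclideanSpace ℂ (Fin m)) :=
  measureSpaceOfInnerProductSpace

namespace BallFill

open Filter Topology Set
open scoped InnerProductSpace ENNReal

set_option linter.unusedSectionVars false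

/-! ### Stability of injective holomorphic maps under perturbation -/

section Basic

variable {E : Type*} [NormedAddCommGroup E] [InnerProductSpace ℂ E] [FiniteDimensional ℂ E]

theorem norm_fderiv_le_of_bound {h : E → E} {t r ε : ℝ} (hrt : r < t)
    (hd : DifferentiableOn ℂ h (ball 0 t)) (hb : ∀ z ∈ ball (0 : E) t, ‖h z‖ ≤ ε)
    {z : E} (hz : z ∈ closedBall (0 : E) r) : ‖fderiv ℂ h z‖ ≤ 2 * ε / (t - r) := by
  have hsub : ball z (t - r) ⊆ ball 0 t := by
    apply ball_subset_ball'
    rw [mem_closedBall] at hz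
    linarith
  refine Complex.norm_fderiv_le_div_of_mapsTo_ball (hd.mono hsub) ?_ (sub_pos.2 hrt)
  intro w hw
  have hz' : z ∈ ball (0 : E) t := hsub (mem_ball_self (sub_pos.2 hrt))
  rw [mem_closedBall, dist_eq_norm]
  have := norm_sub_le (h w) (h z)
  linarith [hb w (hsub hw), hb z hz']

theorem lipschitz_of_bound {h : E → E} {t r ε : ℝ} (hrt : r < t)
    (hd : DifferentiableOn ℂ h (ball 0 t)) (hb : ∀ z ∈ ball (0 : E) t, ‖h z‖ ≤ ε)
    {z w : E} (hz : z ∈ closedBall (0 : E) r) (hw : w ∈ closedBall (0 : E) r) :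
    ‖h z - h w‖ ≤ 2 * ε / (t - r) * ‖z - w‖ := by
  refine (convex_closedBall (0 : E) r).norm_image_sub_le_of_norm_fderiv_le (𝕜 := ℂ) (f := h)
    (fun x hx => ?_) (fun x hx => norm_fderiv_le_of_bound hrt hd hb hx) hw hz
  exact hd.differentiableAt (isOpen_ball.mem_nhds (closedBall_subset_ball hrt hx))

/-- A uniform limit of holomorphic maps is holomorphic (on a smaller ball). -/
theorem differentiableOn_of_uniform_limit {f : ℕ → E → E} {F : E → E} {r t : ℝ} {e : ℕ → ℝ}
    (hrt : r < t) (hd : ∀ n, DifferentiableOn ℂ (f n) (ball 0 t))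
    (he : Tendsto e atTop (𝓝 0)) (hc : ∀ n, ∀ z ∈ ball (0 : E) t, ‖f n z - F z‖ ≤ e n) :
    DifferentiableOn ℂ F (ball 0 r) := by
  have hsub : closedBall (0 : E) r ⊆ ball 0 t := closedBall_subset_ball hrt
  have hdiff : ∀ n, ∀ z ∈ ball (0 : E) t, DifferentiableAt ℂ (f n) z := fun n z hz =>
    (hd n).differentiableAt (isOpen_ball.mem_nhds hz)
  have key : ∀ n m, ∀ z ∈ ball (0 : E) r,
      ‖fderiv ℂ (f n) z - fderiv ℂ (f m) z‖ ≤ 2 * (e n + e m) / (t - r) := by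
    intro n m z hz
    have hz' := hsub (ball_subset_closedBall hz)
    rw [← fderiv_sub (hdiff n z hz') (hdiff m z hz')]
    refine norm_fderiv_le_of_bound hrt ((hd n).sub (hd m)) ?_ (ball_subset_closedBall hz)
    intro w hw
    have h1 := hc n w hw
    have h2 := hc m w hw
    have : (f n - f m) w = (f n w - F w) - (f m w - F w) := by simp
    rw [this]
    exact (norm_sub_le _ _).trans (add_le_add h1 h2)
  have hcau : UniformCauchySeqOn (fun n => fderiv ℂ (f n)) atTop (ball (0 : E) r) := by
    rw [Metric.uniformCauchySeqOn_iff]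
    intro δ hδ
    have hpos : 0 < δ * (t - r) / 4 := by have := sub_pos.2 hrt; positivity
    obtain ⟨N, hN⟩ := eventually_atTop.1 (he.eventually (gt_mem_nhds hpos))
    refine ⟨N, fun m hm n hn z hz => ?_⟩
    rw [dist_eq_norm]
    refine (key m n z hz).trans_lt ?_
    rw [div_lt_iff₀ (sub_pos.2 hrt)]
    linarith [hN m hm, hN n hn]
  have hlim : ∀ z ∈ ball (0 : E) r, ∃ L, Tendsto (fun n => fderiv ℂ (f n) z) atTop (𝓝 L) :=
    fun z hz => cauchySeq_tendsto_of_complete (hcau.cauchySeq hz)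
  choose! L hL using hlim
  have hun := hcau.tendstoUniformlyOn_of_tendsto hL
  intro z hz
  refine (hasFDerivAt_of_tendstoUniformlyOn isOpen_ball hun
    (fun n w hw => (hdiff n w (hsub (ball_subset_closedBall hw))).hasFDerivAt)
    (fun w hw => ?_) hz).differentiableAt.differentiableWithinAt
  rw [tendsto_iff_norm_sub_tendsto_zero]
  exact squeeze_zero (fun _ => norm_nonneg _)
    (fun n => hc n w (hsub (ball_subset_closedBall hw))) he

/-- The derivative of a differentiable map that expands distances by a factor `c` is injective. -/
theorem fderiv_injective_of_antilip {g : E → E} {s : Set E} (hs : IsOpen s) {c : ℝ} (hc : 0 < c)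
    (hanti : ∀ z ∈ s, ∀ w ∈ s, c * ‖z - w‖ ≤ ‖g z - g w‖) {z : E} (hz : z ∈ s) {L : E →L[ℂ] E}
    (hL : HasFDerivAt g L z) : Function.Injective L := by
  rw [injective_iff_map_eq_zero]
  intro v hv
  by_contra hne
  have hvpos : 0 < ‖v‖ := norm_pos_iff.2 hne
  have h1 : HasDerivAt (fun a : ℂ => g (z + a • v)) (L v) 0 := by
    have h2 : HasDerivAt (fun a : ℂ => z + a • v) v 0 := by
      simpa using ((hasDerivAt_id (0 : ℂ)).smul_const v).const_add z
    have h3 : HasFDerivAt g L (z + (0 : ℂ) • v) := by simpa using hL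
    exact h3.comp_hasDerivAt (0 : ℂ) h2
  rw [hv, hasDerivAt_iff_isLittleO] at h1
  have hcont : Tendsto (fun a : ℂ => z + a • v) (𝓝 0) (𝓝 z) := by
    have : Continuous fun a : ℂ => z + a • v := by fun_prop
    simpa using this.tendsto 0
  have hev := (h1.bound (show 0 < c * ‖v‖ / 2 by positivity)).and
    (hcont.eventually (hs.mem_nhds hz))
  obtain ⟨δ, hδ, hball⟩ := Metric.eventually_nhds_iff.1 hev
  have hd : dist ((δ / 2 : ℝ) : ℂ) 0 < δ := by
    rw [dist_zero_right, Complex.norm_real, Real.norm_eq_abs, abs_of_pos (by positivity)]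
    linarith
  obtain ⟨ha, hb⟩ := hball hd
  have hx := hanti _ hb z hz
  simp only [sub_zero, zero_smul, add_zero, smul_zero, add_sub_cancel_left, norm_smul] at ha hx
  have hpos : 0 < ‖((δ / 2 : ℝ) : ℂ)‖ := by
    rw [Complex.norm_real, Real.norm_eq_abs, abs_of_pos (by positivity)]; positivity
  have : 0 < ‖((δ / 2 : ℝ) : ℂ)‖ * (c * ‖v‖) := by positivity
  nlinarith

/-- First-order condition: a local minimum of `‖g - y‖²` at which the derivative of `g` is
surjective is a solution of `g = y`. -/
theorem eq_of_isLocalMin {g : E → E} {y z : E} {L : E →L[ℂ] E} (hL : HasFDerivAt g L z)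
    (hsurj : Function.Surjective L) (hmin : IsLocalMin (fun w => ‖g w - y‖ ^ 2) z) : g z = y := by
  obtain ⟨v, hv⟩ := hsurj (g z - y)
  have h2 : HasDerivAt (fun a : ℝ => z + (a : ℂ) • v) v 0 := by
    have := ((hasDerivAt_id (0 : ℝ)).ofReal_comp.smul_const v).const_add z
    simpa using this
  have h3 : HasFDerivAt g (L.restrictScalars ℝ) (z + ((0 : ℝ) : ℂ) • v) := by
    simpa using hL.restrictScalars ℝ
  have h4' : HasDerivAt (fun a : ℝ => g (z + (a : ℂ) • v)) (L v) 0 := by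
    have := HasFDerivAt.comp_hasDerivAt (𝕜 := ℝ) (l := g) (l' := L.restrictScalars ℝ) (0 : ℝ) h3 h2
    exact this
  have h4 : HasDerivAt (fun a : ℝ => g (z + (a : ℂ) • v) - y) (L v) 0 := h4'.sub_const y
  let _ : InnerProductSpace ℝ E := InnerProductSpace.rclikeToReal ℂ E
  have h5 := h4.norm_sq
  have hcont : Tendsto (fun a : ℝ => z + (a : ℂ) • v) (𝓝 0) (𝓝 z) := by
    have : Continuous fun a : ℝ => z + (a : ℂ) • v := by fun_prop
    simpa using this.tendsto 0
  have hm : IsLocalMin (fun a : ℝ => ‖g (z + (a : ℂ) • v) - y‖ ^ 2) 0 := by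
    have := hcont.eventually hmin
    filter_upwards [this] with a ha
    simpa using ha
  have h6 := hm.hasDerivAt_eq_zero h5
  simp only [Complex.ofReal_zero, zero_smul, add_zero, hv] at h6
  have h7 : ‖g z - y‖ ^ 2 = 0 := by
    rw [← real_inner_self_eq_norm_sq]; linarith
  have h8 : ‖g z - y‖ = 0 := by simpa using h7
  exact sub_eq_zero.1 (norm_eq_zero.1 h8)

/-- If `‖g - y‖` is larger on a sphere than at its centre `x₀` and `g` is expanding, the minimum of
`‖g - y‖` over the closed ball is interior, hence zero. -/
theorem mem_image_of_antilip {g : E → E} {x₀ y : E} {δ δ' c a : ℝ} (hδ : 0 < δ) (hδ' : δ < δ')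
    (hc : 0 < c) (hd : DifferentiableOn ℂ g (ball x₀ δ'))
    (hanti : ∀ z ∈ ball x₀ δ', ∀ w ∈ ball x₀ δ', c * ‖z - w‖ ≤ ‖g z - g w‖)
    (h0 : ‖g x₀ - y‖ ≤ a) (hsph : ∀ z ∈ sphere x₀ δ, a < ‖g z - y‖) :
    y ∈ g '' ball x₀ δ := by
  have hsub : closedBall x₀ δ ⊆ ball x₀ δ' := closedBall_subset_ball hδ'
  have hcont : ContinuousOn (fun w => ‖g w - y‖ ^ 2) (closedBall x₀ δ) :=
    ((hd.continuousOn.mono hsub).sub continuousOn_const).norm.pow 2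
  have : ProperSpace E := FiniteDimensional.proper ℂ E
  obtain ⟨z, hz, hzmin⟩ := (isCompact_closedBall x₀ δ).exists_isMinOn
    ⟨x₀, mem_closedBall_self hδ.le⟩ hcont
  have hle : ‖g z - y‖ ≤ a := by
    have h1 : ‖g z - y‖ ^ 2 ≤ ‖g x₀ - y‖ ^ 2 := hzmin (mem_closedBall_self hδ.le)
    exact (abs_le_of_sq_le_sq' h1 (norm_nonneg _)).2.trans h0
  have hzb : z ∈ ball x₀ δ := by
    rcases (mem_closedBall.1 hz).lt_or_eq with h | h
    · exact h
    · exact absurd (hsph z h) (not_lt.2 hle)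
  have hzd : z ∈ ball x₀ δ' := hsub hz
  have hder := (hd.differentiableAt (isOpen_ball.mem_nhds hzd)).hasFDerivAt
  have hinj := fderiv_injective_of_antilip isOpen_ball hc hanti hzd hder
  have hsurj : Function.Surjective (fderiv ℂ g z) :=
    (LinearMap.injective_iff_surjective (f := (fderiv ℂ g z : E →ₗ[ℂ] E))).1 hinj
  refine ⟨z, hzb, eq_of_isLocalMin hder hsurj ?_⟩
  filter_upwards [isOpen_ball.mem_nhds hzb] with w hw
  exact hzmin (ball_subset_closedBall hw)

/-- A holomorphic map uniformly close to an expanding one is injective on a smaller ball and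
covers the image of that smaller ball; it also maps the smaller ball into any open set containing
its original image. -/
theorem stability {f : E → E} {r t c : ℝ} (hrt : r < t) (hc : 0 < c)
    (hf : DifferentiableOn ℂ f (ball 0 t))
    (hanti : ∀ z ∈ ball (0 : E) t, ∀ w ∈ ball (0 : E) t, c * ‖z - w‖ ≤ ‖f z - f w‖)
    {U : Set E} (hU : IsOpen U) (hfU : f '' closedBall 0 r ⊆ U) :
    ∃ e > 0, ∀ g : E → E, DifferentiableOn ℂ g (ball 0 t) →
      (∀ z ∈ ball (0 : E) t, ‖g z - f z‖ ≤ e) →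
      InjOn g (closedBall 0 r) ∧ g '' closedBall 0 r ⊆ U ∧ f '' closedBall 0 r ⊆ g '' ball 0 t := by
  have : ProperSpace E := FiniteDimensional.proper ℂ E
  have hcpt : IsCompact (f '' closedBall (0 : E) r) :=
    (isCompact_closedBall _ _).image_of_continuousOn
      (hf.continuousOn.mono (closedBall_subset_ball hrt))
  obtain ⟨d, hd, hdU⟩ := hcpt.exists_thickening_subset_open hU hfU
  have htr : 0 < t - r := sub_pos.2 hrt
  set r₁ := (r + t) / 2 with hr₁
  refine ⟨min (d / 2) (c * (t - r) / 16), by positivity, fun g hg hgf => ?_⟩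
  set e := min (d / 2) (c * (t - r) / 16) with he
  have he1 : e ≤ d / 2 := min_le_left _ _
  have he2 : e ≤ c * (t - r) / 16 := min_le_right _ _
  have hr₁t : r₁ < t := by rw [hr₁]; linarith
  have hsub : closedBall (0 : E) r₁ ⊆ ball 0 t := closedBall_subset_ball hr₁t
  have hganti : ∀ z ∈ closedBall (0 : E) r₁, ∀ w ∈ closedBall (0 : E) r₁,
      c / 2 * ‖z - w‖ ≤ ‖g z - g w‖ := by
    intro z hz w hw
    have h1 := lipschitz_of_bound hr₁t (hg.sub hf) hgf hz hw
    have h2 := hanti z (hsub hz) w (hsub hw)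
    have h3 : 2 * e / (t - r₁) ≤ c / 2 := by
      rw [div_le_iff₀ (by linarith)]
      have : t - r₁ = (t - r) / 2 := by rw [hr₁]; ring
      rw [this]; nlinarith
    have h4 : f z - f w = (g z - g w) - ((g - f) z - (g - f) w) := by
      simp only [Pi.sub_apply]; abel
    have h5 := norm_sub_le (g z - g w) ((g - f) z - (g - f) w)
    rw [← h4] at h5
    have h6 : 2 * e / (t - r₁) * ‖z - w‖ ≤ c / 2 * ‖z - w‖ := by gcongr
    linarith
  have hrr : closedBall (0 : E) r ⊆ closedBall 0 r₁ := closedBall_subset_closedBall (by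
    rw [hr₁]; linarith)
  refine ⟨fun z hz w hw hzw => ?_, ?_, ?_⟩
  · have := hganti z (hrr hz) w (hrr hw)
    rw [hzw, sub_self, norm_zero] at this
    have h7 : ‖z - w‖ ≤ 0 := by nlinarith [norm_nonneg (z - w)]
    exact sub_eq_zero.1 (norm_le_zero_iff.1 h7)
  · rintro _ ⟨z, hz, rfl⟩
    refine hdU (mem_thickening_iff.2 ⟨f z, mem_image_of_mem f hz, ?_⟩)
    rw [dist_eq_norm]
    linarith [hgf z (hsub (hrr hz))]
  · rintro _ ⟨x₀, hx₀, rfl⟩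
    have hx0 : ‖x₀‖ ≤ r := by simpa using hx₀
    have hb : ball x₀ ((t - r) / 2) ⊆ closedBall 0 r₁ := by
      refine ball_subset_closedBall.trans (closedBall_subset_closedBall' ?_)
      rw [dist_zero_right, hr₁]; linarith
    have hmem := mem_image_of_antilip (g := g) (x₀ := x₀) (y := f x₀) (δ := (t - r) / 4)
      (δ' := (t - r) / 2) (c := c / 2) (a := e) (by positivity) (by linarith) (by positivity)
      (hg.mono (hb.trans hsub)) (fun z hz w hw => hganti z (hb hz) w (hb hw))
      (hgf _ (hsub (hrr hx₀))) ?_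
    · obtain ⟨z, hz, hzy⟩ := hmem
      exact ⟨z, hsub (hb (ball_subset_ball (by linarith) hz)), hzy⟩
    · intro z hz
      have hzb : z ∈ closedBall (0 : E) r₁ := hb (by
        rw [mem_ball, mem_sphere.1 hz]; linarith)
      have h1 := hanti z (hsub hzb) x₀ (hsub (hrr hx₀))
      have h2 := hgf z (hsub hzb)
      have h3 : ‖z - x₀‖ = (t - r) / 4 := by rw [← dist_eq_norm]; exact hz
      rw [h3] at h1
      have h4 : f z - f x₀ = (g z - f x₀) - (g z - f z) := by abel
      have h5 := norm_sub_le (g z - f x₀) (g z - f z)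
      rw [← h4] at h5
      have : 0 < c * (t - r) := by positivity
      linarith

end Basic

/-! ### Polar decomposition and the nearest boundary point -/

section Linear

/-- The estimate along the complex line through the singularity of the spike: in the sector
`|arg| ≤ π / 4` the increments of `a s²` and of `-b / s` do not cancel each other. -/
theorem one_dim_estimate {s t : ℂ} {a b : ℝ} (ha : 0 < a) (hb : 0 < b) (hs : |s.im| ≤ s.re)
    (ht : |t.im| ≤ t.re) (hs0 : 0 < s.re) (ht0 : 0 < t.re) :
    a * ‖s ^ 2 - t ^ 2‖ ≤ 2 * ‖(a : ℂ) * (s ^ 2 - t ^ 2) - b * (1 / s - 1 / t)‖ ∧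
    b * ‖1 / s - 1 / t‖ ≤ 3 * ‖(a : ℂ) * (s ^ 2 - t ^ 2) - b * (1 / s - 1 / t)‖ := by
  have hsne : s ≠ 0 := fun h => by simp [h] at hs0
  have htne : t ≠ 0 := fun h => by simp [h] at ht0
  set A : ℂ := a * (s + t) with hA
  set B : ℂ := b * (s * t)⁻¹ with hB
  have hX : (a : ℂ) * (s ^ 2 - t ^ 2) - b * (1 / s - 1 / t) = (s - t) * (A + B) := by
    rw [hA, hB]; field_simp; ring
  have hX1 : (a : ℂ) * (s ^ 2 - t ^ 2) = (s - t) * A := by rw [hA]; ring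
  have hX2 : (b : ℂ) * (1 / s - 1 / t) = -((s - t) * B) := by rw [hB]; field_simp; ring
  have hn1 : a * ‖s ^ 2 - t ^ 2‖ = ‖s - t‖ * ‖A‖ := by
    rw [← norm_mul, ← hX1, norm_mul, Complex.norm_real, Real.norm_of_nonneg ha.le]
  have hn2 : b * ‖1 / s - 1 / t‖ = ‖s - t‖ * ‖B‖ := by
    rw [← norm_mul, ← norm_neg ((s - t) * B), ← hX2, norm_mul, Complex.norm_real, Real.norm_of_nonneg hb.le]
  have hBre : 0 ≤ B.re := by
    rw [hB, Complex.re_ofReal_mul, Complex.inv_re]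
    have : 0 ≤ (s * t).re := by
      rw [Complex.mul_re]
      have h1 : |s.im * t.im| ≤ s.re * t.re := by
        rw [abs_mul]; gcongr
      linarith [le_abs_self (s.im * t.im)]
    have := Complex.normSq_nonneg (s * t)
    positivity
  have hAre : |A.im| ≤ A.re := by
    rw [hA, Complex.re_ofReal_mul, Complex.im_ofReal_mul, abs_mul, abs_of_pos ha]
    gcongr
    simp only [Complex.add_im, Complex.add_re]
    exact (abs_add_le _ _).trans (add_le_add hs ht)
  have hre : A.re ≤ ‖A + B‖ := by
    have := Complex.re_le_norm (A + B)
    rw [Complex.add_re] at this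
    linarith
  have hA2 : ‖A‖ ≤ 2 * ‖A + B‖ := by
    have h1 := Complex.norm_le_abs_re_add_abs_im A
    have h2 : |A.re| = A.re := abs_of_nonneg ((abs_nonneg _).trans hAre)
    linarith
  have hB3 : ‖B‖ ≤ 3 * ‖A + B‖ := by
    have : ‖B‖ ≤ ‖A + B‖ + ‖A‖ := by
      have := norm_sub_le (A + B) A
      simpa using this
    linarith
  rw [hX, norm_mul, hn1, hn2]
  constructor <;> nlinarith [norm_nonneg (s - t)]

variable {E : Type*} [NormedAddCommGroup E] [InnerProductSpace ℂ E] [FiniteDimensional ℂ E]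

theorem exists_pos_le_norm {T : E →ₗ[ℂ] E} (hT : Function.Injective T) :
    ∃ c > 0, ∀ v, c * ‖v‖ ≤ ‖T v‖ := by
  obtain ⟨K, hK, hanti⟩ := T.exists_antilipschitzWith (LinearMap.ker_eq_bot.2 hT)
  refine ⟨(K : ℝ)⁻¹, by positivity, fun v => ?_⟩
  have := hanti.le_mul_dist v 0
  rw [dist_zero_right, map_zero, dist_zero_right] at this
  rw [inv_mul_le_iff₀ (by positivity)]
  exact this

/-- Polar decomposition `T = M P` of an injective operator: the unitary factor `M` and the
coercivity of `P = M⁻¹ T`.  Vectors fixed by `T† T` are fixed by `P`. -/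
theorem exists_polar (T : E →L[ℂ] E) (hT : Function.Injective T) :
    ∃ M : E ≃ₗᵢ[ℂ] E, (∃ c > 0, ∀ v, c * ‖v‖ ^ 2 ≤ (⟪M v, T v⟫_ℂ).re) ∧
      ∀ x, (∀ v, ⟪T v, T x⟫_ℂ = ⟪v, x⟫_ℂ) → M x = T x := by
  have : CompleteSpace E := FiniteDimensional.complete ℂ E
  set A : E →L[ℂ] E := ContinuousLinearMap.adjoint T * T with hA
  have hA0 : 0 ≤ A := by
    rw [ContinuousLinearMap.nonneg_iff_isPositive]
    exact ContinuousLinearMap.isPositive_adjoint_comp_self T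
  set P := CFC.sqrt A with hP
  have hP0 : 0 ≤ P := CFC.sqrt_nonneg A
  have hPP : P * P = A := CFC.sqrt_mul_sqrt_self A hA0
  set Q := CFC.sqrt P with hQ
  have hQ0 : 0 ≤ Q := CFC.sqrt_nonneg P
  have hQQ : Q * Q = P := CFC.sqrt_mul_sqrt_self P hP0
  rw [ContinuousLinearMap.nonneg_iff_isPositive] at hP0 hQ0
  have hPs : ∀ v w, ⟪P v, w⟫_ℂ = ⟪v, P w⟫_ℂ := fun v w => hP0.isSymmetric v w
  have hQs : ∀ v w, ⟪Q v, w⟫_ℂ = ⟪v, Q w⟫_ℂ := fun v w => hQ0.isSymmetric v w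
  have hPP' : ∀ v w, ⟪P v, P w⟫_ℂ = ⟪T v, T w⟫_ℂ := by
    intro v w
    have : P (P w) = A w := by rw [← hPP]; rfl
    rw [hPs, this, hA]
    exact ContinuousLinearMap.adjoint_inner_right T v (T w)
  have hQQ' : ∀ v w, ⟪Q v, Q w⟫_ℂ = ⟪v, P w⟫_ℂ := by
    intro v w
    have : Q (Q w) = P w := by rw [← hQQ]; rfl
    rw [hQs, this]
  have hnorm : ∀ v, ‖P v‖ = ‖T v‖ := by
    intro v
    rw [@norm_eq_sqrt_re_inner ℂ, @norm_eq_sqrt_re_inner ℂ, hPP']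
  have hPinj : Function.Injective P := by
    rw [injective_iff_map_eq_zero]
    intro v hv
    have := hnorm v
    rw [hv, norm_zero] at this
    exact (injective_iff_map_eq_zero T).1 hT v (norm_eq_zero.1 this.symm)
  have hQinj : Function.Injective Q := by
    rw [injective_iff_map_eq_zero]
    intro v hv
    apply (injective_iff_map_eq_zero P).1 hPinj v
    rw [← hQQ, mul_apply_eq_comp, hv, map_zero]
  let Pe : E ≃ₗ[ℂ] E := LinearEquiv.ofInjectiveEndo (P : E →ₗ[ℂ] E) hPinj
  have hPe : ∀ v, Pe v = P v := fun v => rfl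
  let M₀ : E →ₗᵢ[ℂ] E :=
    { toLinearMap := (T : E →ₗ[ℂ] E).comp (Pe.symm : E →ₗ[ℂ] E)
      norm_map' := fun v => by
        have h1 := hnorm (Pe.symm v)
        rw [← hPe, LinearEquiv.apply_symm_apply] at h1
        exact h1.symm }
  let M : E ≃ₗᵢ[ℂ] E := M₀.toLinearIsometryEquiv rfl
  have hM : ∀ w, M (P w) = T w := by
    intro w
    change T (Pe.symm (P w)) = T w
    rw [← hPe, LinearEquiv.symm_apply_apply]
  refine ⟨M, ?_, ?_⟩
  · obtain ⟨c, hc, hcQ⟩ := exists_pos_le_norm (T := (Q : E →ₗ[ℂ] E)) hQinj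
    refine ⟨c ^ 2, by positivity, fun v => ?_⟩
    obtain ⟨w, rfl⟩ := Pe.surjective v
    rw [hPe, hM, ← hPP', ← hQQ']
    have h1 := hcQ (P w)
    rw [ContinuousLinearMap.coe_coe] at h1
    have h2 : (⟪Q (P w), Q (P w)⟫_ℂ).re = ‖Q (P w)‖ ^ 2 := by
      rw [inner_self_eq_norm_sq_to_K]; norm_cast
    rw [h2, ← mul_pow]
    gcongr
  · intro x hx
    have h1 : P (P x) = x := by
      refine ext_inner_left ℂ fun v => ?_
      rw [← hPs, hPP', hx]
    have h2 : P x = x := by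
      set w := P x - x with hw
      have h3 : P w = -w := by rw [hw, map_sub, h1]; abel
      have h4 := hQQ' w w
      rw [h3, inner_neg_right, inner_self_eq_norm_sq_to_K, inner_self_eq_norm_sq_to_K] at h4
      have h5 : ‖Q w‖ ^ 2 = -‖w‖ ^ 2 := by exact_mod_cast h4
      have h6 : ‖w‖ ^ 2 = 0 := by nlinarith [sq_nonneg ‖Q w‖, sq_nonneg ‖w‖]
      have h7 : w = 0 := by simpa using h6
      exact sub_eq_zero.1 h7
    rw [← h2, hM, h2]

/-- If `D` maps the complex hyperplane `x⊥` into `n⊥`, there is a unitary `M` with `M x = n` such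
that `M⁻¹ D` is coercive on `x⊥`. -/
theorem exists_unitary {D : E →L[ℂ] E} (hD : Function.Injective D) {x n : E} {a : ℝ}
    (hx : ‖x‖ = 1) (hn : ‖n‖ = 1) (hnD : ∀ v, ⟪n, D v⟫_ℂ = a * ⟪x, v⟫_ℂ) :
    ∃ M : E ≃ₗᵢ[ℂ] E, M x = n ∧ ∃ c > 0, ∀ v, ⟪x, v⟫_ℂ = 0 →
      c * ‖v‖ ^ 2 ≤ (⟪M v, D v⟫_ℂ).re := by
  have hxx : ⟪x, x⟫_ℂ = 1 := by rw [inner_self_eq_norm_sq_to_K, hx]; norm_num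
  have hnn : ⟪n, n⟫_ℂ = 1 := by rw [inner_self_eq_norm_sq_to_K, hn]; norm_num
  let T : E →L[ℂ] E := (innerSL ℂ x).smulRight n +
    D.comp (ContinuousLinearMap.id ℂ E - (innerSL ℂ x).smulRight x)
  have hT : ∀ v, T v = ⟪x, v⟫_ℂ • n + D (v - ⟪x, v⟫_ℂ • x) := fun v => by
    simp [T]
  have hnT : ∀ v, ⟪n, T v⟫_ℂ = ⟪x, v⟫_ℂ := by
    intro v
    rw [hT, inner_add_right, inner_smul_right, hnn, hnD, inner_sub_right, inner_smul_right, hxx]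
    ring
  have hTinj : Function.Injective T := by
    rw [injective_iff_map_eq_zero]
    intro v hv
    have h1 := hnT v
    rw [hv, inner_zero_right] at h1
    rw [hT, ← h1, zero_smul, zero_smul, zero_add, sub_zero] at hv
    exact (injective_iff_map_eq_zero D).1 hD v hv
  have hTx : T x = n := by rw [hT, hxx, one_smul, one_smul, sub_self, map_zero, add_zero]
  obtain ⟨M, ⟨c, hc, hcM⟩, hM⟩ := exists_polar T hTinj
  refine ⟨M, ?_, c, hc, fun v hv => ?_⟩
  · rw [hM x, hTx]
    intro v
    rw [hTx, ← inner_conj_symm, hnT, inner_conj_symm]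
  · have h1 := hcM v
    rw [hT, hv, zero_smul, zero_smul, zero_add, sub_zero] at h1
    exact h1

/-- At a nearest point `f x` of `f (closedBall 0 1)` to `y`, the unit vector `n` towards `y` is
a positive normal: the pullback of the functional `⟪n, ·⟫` under `f'(x)` is a positive multiple of
`⟪x, ·⟫`. -/
theorem exists_nearest {f : E → E} {r c ρ : ℝ} {y : E} (hr : 1 < r) (hc : 0 < c)
    (hf : DifferentiableOn ℂ f (ball 0 r))
    (hanti : ∀ z ∈ ball (0 : E) r, ∀ w ∈ ball (0 : E) r, c * ‖z - w‖ ≤ ‖f z - f w‖)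
    (hρ : infDist y (f '' closedBall 0 1) = ρ) (hρ0 : 0 < ρ) :
    ∃ (x n : E) (a : ℝ), ‖x‖ = 1 ∧ ‖n‖ = 1 ∧ 0 < a ∧ y = f x + (ρ : ℂ) • n ∧
      ∀ v, ⟪n, fderiv ℂ f x v⟫_ℂ = a * ⟪x, v⟫_ℂ := by
  have : ProperSpace E := FiniteDimensional.proper ℂ E
  have : CompleteSpace E := FiniteDimensional.complete ℂ E
  have hsub : closedBall (0 : E) 1 ⊆ ball 0 r := closedBall_subset_ball hr
  have hcpt : IsCompact (f '' closedBall (0 : E) 1) :=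
    (isCompact_closedBall _ _).image_of_continuousOn (hf.continuousOn.mono hsub)
  obtain ⟨_, ⟨x, hx, rfl⟩, hxy⟩ := hcpt.exists_infDist_eq_dist
    ⟨f 0, mem_image_of_mem f (mem_closedBall_self zero_le_one)⟩ y
  rw [hρ] at hxy
  have hmin : ∀ w ∈ closedBall (0 : E) 1, ‖f x - y‖ ^ 2 ≤ ‖f w - y‖ ^ 2 := by
    intro w hw
    have h1 : ρ ≤ dist y (f w) := hρ ▸ infDist_le_dist_of_mem (mem_image_of_mem f hw)
    rw [hxy, dist_comm, dist_comm y, dist_eq_norm, dist_eq_norm] at h1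
    gcongr
  have hder := (hf.differentiableAt (isOpen_ball.mem_nhds (hsub hx))).hasFDerivAt
  set D := fderiv ℂ f x with hD
  have hinj : Function.Injective D :=
    fderiv_injective_of_antilip isOpen_ball hc hanti (hsub hx) hder
  have hsurj : Function.Surjective D :=
    (LinearMap.injective_iff_surjective (f := (D : E →ₗ[ℂ] E))).1 hinj
  have hx1 : ‖x‖ = 1 := by
    rcases (mem_closedBall_zero_iff.1 hx).lt_or_eq with h | h
    · exfalso
      have h1 : f x = y := by
        refine eq_of_isLocalMin hder hsurj ?_
        filter_upwards [isOpen_ball.mem_nhds (mem_ball_zero_iff.2 h)] with w hw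
        exact hmin w (ball_subset_closedBall hw)
      rw [h1, dist_self] at hxy
      exact hρ0.ne' hxy
    · exact h
  have hρc : (ρ : ℂ) ≠ 0 := by exact_mod_cast hρ0.ne'
  set n : E := (ρ : ℂ)⁻¹ • (y - f x) with hn
  have hyn : y - f x = (ρ : ℂ) • n := by rw [hn, smul_inv_smul₀ hρc]
  have hn1 : ‖n‖ = 1 := by
    rw [hn, norm_smul, norm_inv, Complex.norm_real, Real.norm_of_nonneg hρ0.le, ← dist_eq_norm,
      ← hxy, inv_mul_cancel₀ (ne_of_gt hρ0)]
  -- one-sided first-order condition along rays entering the ball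
  have hone : ∀ v, (⟪x, v⟫_ℂ).re < 0 → (⟪n, D v⟫_ℂ).re ≤ 0 := by
    intro v hv
    have h2 : HasDerivAt (fun a : ℝ => x + (a : ℂ) • v) v 0 := by
      have := ((hasDerivAt_id (0 : ℝ)).ofReal_comp.smul_const v).const_add x
      simpa using this
    have h3 : HasFDerivAt f (D.restrictScalars ℝ) (x + ((0 : ℝ) : ℂ) • v) := by
      simpa using hder.restrictScalars ℝ
    have h4' : HasDerivAt (fun a : ℝ => f (x + (a : ℂ) • v)) (D v) 0 := by
      have := HasFDerivAt.comp_hasDerivAt (𝕜 := ℝ) (l := f) (l' := D.restrictScalars ℝ) (0 : ℝ)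
        h3 h2
      exact this
    have h4 : HasDerivAt (fun a : ℝ => f (x + (a : ℂ) • v) - y) (D v) 0 := h4'.sub_const y
    let _ : InnerProductSpace ℝ E := InnerProductSpace.rclikeToReal ℂ E
    have h5 := h4.norm_sq.tendsto_slope_zero_right
    simp only [Complex.ofReal_zero, zero_smul, add_zero, zero_add] at h5
    have h6 : ∀ᶠ a : ℝ in 𝓝[>] 0, a < -2 * (⟪x, v⟫_ℂ).re / (‖v‖ ^ 2 + 1) := by
      apply nhdsWithin_le_nhds
      apply gt_mem_nhds
      have : 0 < ‖v‖ ^ 2 + 1 := by positivity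
      apply div_pos _ this
      linarith
    have h7 : 0 ≤ 2 * (inner ℝ (f x - y) (D v)) := by
      refine ge_of_tendsto h5 ?_
      filter_upwards [h6, self_mem_nhdsWithin] with a ha ha0
      have ha0 : 0 < a := ha0
      have hle : ‖x + (a : ℂ) • v‖ ≤ 1 := by
        have h8 := @norm_add_sq ℂ E _ _ _ x ((a : ℂ) • v)
        rw [inner_smul_right, norm_smul, hx1, Complex.norm_real, Real.norm_of_nonneg ha0.le] at h8
        have h9 : RCLike.re ((a : ℂ) * ⟪x, v⟫_ℂ) = a * (⟪x, v⟫_ℂ).re := by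
          change ((a : ℂ) * ⟪x, v⟫_ℂ).re = _
          rw [Complex.re_ofReal_mul]
        rw [h9] at h8
        rw [lt_div_iff₀ (by positivity)] at ha
        have h10 : ‖x + (a : ℂ) • v‖ ^ 2 ≤ 1 := by
          rw [h8]; nlinarith
        have := norm_nonneg (x + (a : ℂ) • v)
        nlinarith
      have := hmin _ (mem_closedBall_zero_iff.2 hle)
      rw [smul_eq_mul]
      have : 0 ≤ a⁻¹ := by positivity
      apply mul_nonneg this
      linarith
    have h8 : inner ℝ (f x - y) (D v) = (⟪f x - y, D v⟫_ℂ).re := rfl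
    have h9 : f x - y = -((ρ : ℂ) • n) := by rw [← hyn]; abel
    rw [h8, h9, inner_neg_left, inner_smul_left, Complex.conj_ofReal, Complex.neg_re,
      Complex.re_ofReal_mul] at h7
    by_contra hcon
    push Not at hcon
    nlinarith [mul_pos hρ0 hcon]
  set d := ContinuousLinearMap.adjoint D n with hd
  have hdv : ∀ v, ⟪n, D v⟫_ℂ = ⟪d, v⟫_ℂ := fun v =>
    (ContinuousLinearMap.adjoint_inner_left D v n).symm
  have hxx : ⟪x, x⟫_ℂ = 1 := by rw [inner_self_eq_norm_sq_to_K, hx1]; norm_num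
  have hcl : ∀ v, (⟪x, v⟫_ℂ).re ≤ 0 → (⟪d, v⟫_ℂ).re ≤ 0 := by
    intro v hv
    have h1 : ∀ ε > 0, (⟪d, v⟫_ℂ).re ≤ ε * (⟪d, x⟫_ℂ).re := by
      intro ε hε
      have := hone (v - (ε : ℂ) • x) (by
        rw [inner_sub_right, inner_smul_right, hxx, mul_one, Complex.sub_re, Complex.ofReal_re]
        linarith)
      rw [hdv, inner_sub_right, inner_smul_right, Complex.sub_re, Complex.re_ofReal_mul] at this
      linarith
    have h2 : Tendsto (fun ε : ℝ => ε * (⟪d, x⟫_ℂ).re) (𝓝[>] 0) (𝓝 0) := by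
      have : Continuous (fun ε : ℝ => ε * (⟪d, x⟫_ℂ).re) := by fun_prop
      have := this.tendsto 0
      rw [zero_mul] at this
      exact this.mono_left nhdsWithin_le_nhds
    refine ge_of_tendsto h2 ?_
    filter_upwards [self_mem_nhdsWithin] with ε hε
    exact h1 ε hε
  set a := (⟪x, d⟫_ℂ).re with ha
  have hdx : (⟪d, x⟫_ℂ).re = a := by rw [← inner_conj_symm, Complex.conj_re]
  have hda : d = (a : ℂ) • x := by
    have h1 := hcl (d - (a : ℂ) • x) (by
      rw [inner_sub_right, inner_smul_right, hxx, mul_one, Complex.sub_re, Complex.ofReal_re]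
      linarith)
    rw [inner_sub_right, inner_smul_right, Complex.sub_re, Complex.re_ofReal_mul, hdx] at h1
    have h2 : (⟪x, d - (a : ℂ) • x⟫_ℂ).re = 0 := by
      rw [inner_sub_right, inner_smul_right, hxx, mul_one, Complex.sub_re, Complex.ofReal_re]
      linarith
    have h3 : (⟪d - (a : ℂ) • x, d - (a : ℂ) • x⟫_ℂ).re ≤ 0 := by
      rw [inner_sub_left, inner_smul_left, Complex.conj_ofReal, Complex.sub_re,
        Complex.re_ofReal_mul, h2, inner_sub_right, inner_smul_right, Complex.sub_re,
        Complex.re_ofReal_mul, hdx]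
      linarith
    rw [inner_self_eq_norm_sq_to_K] at h3
    have h4 : ‖d - (a : ℂ) • x‖ ^ 2 ≤ 0 := by exact_mod_cast h3
    have h5 : ‖d - (a : ℂ) • x‖ = 0 := by
      have := norm_nonneg (d - (a : ℂ) • x)
      nlinarith
    exact sub_eq_zero.1 (norm_eq_zero.1 h5)
  have ha0 : 0 ≤ a := by
    have := hcl (-x) (by rw [inner_neg_right, hxx]; norm_num)
    rw [inner_neg_right, Complex.neg_re, hdx] at this
    linarith
  have ha1 : a ≠ 0 := by
    intro h0
    obtain ⟨w, hw⟩ := hsurj n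
    have h1 := hdv w
    rw [hw, hda, h0, inner_self_eq_norm_sq_to_K, hn1] at h1
    simp at h1
  refine ⟨x, n, a, hx1, hn1, lt_of_le_of_ne ha0 ha1.symm, ?_, fun v => ?_⟩
  · rw [← hyn]; abel
  · rw [hdv, hda, inner_smul_left, Complex.conj_ofReal]

end Linear

/-! ### The holomorphic spike -/

section Spike

/-- The principal square root. -/
noncomputable def csqrt (u : ℂ) : ℂ := u ^ (1 / 2 : ℂ)

theorem csqrt_sq (u : ℂ) : csqrt u ^ 2 = u := by
  simp [csqrt]

theorem csqrt_re_pos {u : ℂ} (hu : 0 < u.re) : 0 < (csqrt u).re := by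
  have hu0 : u ≠ 0 := fun h => by simp [h] at hu
  rw [csqrt, Complex.cpow_def_of_ne_zero hu0, Complex.exp_re]
  have h1 : (Complex.log u * (1 / 2)).im = Complex.arg u / 2 := by
    have : Complex.log u * (1 / 2) = ((1 / 2 : ℝ) : ℂ) * Complex.log u := by push_cast; ring
    rw [this, Complex.im_ofReal_mul, Complex.log_im]; ring
  rw [h1]
  refine mul_pos (Real.exp_pos _) (Real.cos_pos_of_mem_Ioo ⟨?_, ?_⟩)
  · linarith [Complex.neg_pi_lt_arg u]
  · have := Complex.abs_arg_lt_pi_div_two_iff.2 (Or.inl hu)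
    have := (abs_lt.1 this).2
    linarith [Real.pi_pos]

theorem re_sq_sub_im_sq (s : ℂ) : (s ^ 2).re = s.re ^ 2 - s.im ^ 2 := by
  rw [sq, Complex.mul_re]; ring

theorem csqrt_im_le {u : ℂ} (hu : 0 < u.re) : |(csqrt u).im| ≤ (csqrt u).re := by
  have h1 := csqrt_re_pos hu
  have h2 := re_sq_sub_im_sq (csqrt u)
  rw [csqrt_sq] at h2
  exact abs_le_of_sq_le_sq (by linarith) h1.le

theorem csqrt_ne_zero {u : ℂ} (hu : 0 < u.re) : csqrt u ≠ 0 := fun h => by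
  have := csqrt_re_pos hu
  simp [h] at this

theorem norm_csqrt_sq (u : ℂ) : ‖csqrt u‖ ^ 2 = ‖u‖ := by rw [← norm_pow, csqrt_sq]

theorem csqrt_eq {u s : ℂ} (hu : 0 < u.re) (hs : 0 < s.re) (h : s ^ 2 = u) : csqrt u = s := by
  have h1 : csqrt u ^ 2 = s ^ 2 := by rw [csqrt_sq, h]
  rcases sq_eq_sq_iff_eq_or_eq_neg.1 h1 with h2 | h2
  · exact h2
  · have := csqrt_re_pos hu
    rw [h2, Complex.neg_re] at this
    linarith

variable {E : Type*} [NormedAddCommGroup E] [InnerProductSpace ℂ E]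

/-- The coordinate `1 + β - ⟪x, z⟫`, which for small `β > 0` is small only near the boundary
point `x` of the unit ball. -/
noncomputable def ucoord (x : E) (β : ℝ) (z : E) : ℂ := 1 + β - ⟪x, z⟫_ℂ

/-- The component of `z` orthogonal to the unit vector `x`. -/
noncomputable def perp (x z : E) : E := z - ⟪x, z⟫_ℂ • x

/-- The holomorphic spike at the boundary point `x`: with `u = 1 + β - ⟪x, z⟫` it is
`u^(-1/2) M x + (2u)⁻¹ M z'`, where `z'` is the component of `z` orthogonal to `x`. -/
noncomputable def spike (M : E ≃ₗᵢ[ℂ] E) (x : E) (β : ℝ) (z : E) : E :=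
  (csqrt (ucoord x β z))⁻¹ • M x + (2 * ucoord x β z)⁻¹ • M (perp x z)

variable {M : E ≃ₗᵢ[ℂ] E} {x : E} {β : ℝ}

theorem inner_self_one (hx : ‖x‖ = 1) : ⟪x, x⟫_ℂ = 1 := by
  rw [inner_self_eq_norm_sq_to_K, hx]; norm_num

theorem inner_perp (hx : ‖x‖ = 1) (z : E) : ⟪x, perp x z⟫_ℂ = 0 := by
  rw [perp, inner_sub_right, inner_smul_right, inner_self_one hx]; ring

theorem perp_sub (x z w : E) : perp x z - perp x w = perp x (z - w) := by
  simp only [perp, inner_sub_right, sub_smul]; abel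

theorem perp_eq_self {v : E} (h : ⟪x, v⟫_ℂ = 0) : perp x v = v := by
  rw [perp, h, zero_smul, sub_zero]

theorem norm_sq_add {a b : E} (h : ⟪a, b⟫_ℂ = 0) : ‖a + b‖ ^ 2 = ‖a‖ ^ 2 + ‖b‖ ^ 2 := by
  rw [sq, sq, sq]
  exact norm_add_sq_eq_norm_sq_add_norm_sq_of_inner_eq_zero a b h

theorem norm_sq_smul_add (hx : ‖x‖ = 1) (a : ℂ) {v : E} (hv : ⟪x, v⟫_ℂ = 0) :
    ‖a • x + v‖ ^ 2 = ‖a‖ ^ 2 + ‖v‖ ^ 2 := by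
  rw [norm_sq_add (by rw [inner_smul_left, hv, mul_zero]), norm_smul, hx, mul_one]

theorem norm_sq_perp (hx : ‖x‖ = 1) (z : E) : ‖z‖ ^ 2 = ‖⟪x, z⟫_ℂ‖ ^ 2 + ‖perp x z‖ ^ 2 := by
  rw [← norm_sq_smul_add hx _ (inner_perp hx z), perp]
  congr 2; abel

theorem norm_perp_le (hx : ‖x‖ = 1) (z : E) : ‖perp x z‖ ≤ ‖z‖ := by
  have := norm_sq_perp hx z
  have h2 := sq_nonneg ‖⟪x, z⟫_ℂ‖
  exact (abs_le_of_sq_le_sq' (by linarith) (norm_nonneg _)).2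

theorem norm_inner_le (hx : ‖x‖ = 1) (z : E) : ‖⟪x, z⟫_ℂ‖ ≤ ‖z‖ := by
  have := norm_inner_le_norm (𝕜 := ℂ) x z
  rwa [hx, one_mul] at this

theorem ucoord_sub (z w : E) : ucoord x β z - ucoord x β w = -⟪x, z - w⟫_ℂ := by
  rw [ucoord, ucoord, inner_sub_right]; ring

theorem ucoord_re (z : E) : (ucoord x β z).re = 1 + β - (⟪x, z⟫_ℂ).re := by
  simp [ucoord]

theorem ucoord_re_pos (hx : ‖x‖ = 1) {z : E} (hz : ‖z‖ < 1 + β / 2) :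
    β / 2 < (ucoord x β z).re := by
  rw [ucoord_re]
  have := (Complex.re_le_norm _).trans (norm_inner_le hx z)
  linarith

theorem norm_perp_sq_le (hx : ‖x‖ = 1) (hβ : 0 < β) (hβ1 : β ≤ 1) {z : E}
    (hz : ‖z‖ < 1 + β / 2) : ‖perp x z‖ ^ 2 ≤ 3 * ‖ucoord x β z‖ := by
  have h1 := norm_sq_perp hx z
  have h2 := norm_inner_le hx z
  set a := ‖⟪x, z⟫_ℂ‖ with ha
  have h3 : 1 + β - a ≤ ‖ucoord x β z‖ := by
    have := norm_sub_norm_le (1 + β : ℂ) ⟪x, z⟫_ℂ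
    have h4 : ‖(1 + β : ℂ)‖ = 1 + β := by
      have : (1 + β : ℂ) = ((1 + β : ℝ) : ℂ) := by push_cast; ring
      rw [this, Complex.norm_real, Real.norm_of_nonneg (by linarith)]
    rw [h4] at this
    exact this
  have h0 : 0 ≤ a := norm_nonneg _
  have h5 := norm_nonneg (ucoord x β z)
  have h6 := norm_nonneg z
  calc ‖perp x z‖ ^ 2 = (‖z‖ - a) * (‖z‖ + a) := by rw [sub_mul, mul_add, mul_add]; linarith
    _ ≤ ‖ucoord x β z‖ * 3 := by
        apply mul_le_mul <;> linarith
    _ = _ := mul_comm _ _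

theorem inner_Mx_spike (hx : ‖x‖ = 1) (z : E) :
    ⟪M x, spike M x β z⟫_ℂ = (csqrt (ucoord x β z))⁻¹ := by
  rw [spike, inner_add_right, inner_smul_right, inner_smul_right, M.inner_map_map,
    M.inner_map_map, inner_self_one hx, inner_perp hx]
  ring

variable [FiniteDimensional ℂ E]

/-- One direction of `near_estimate`, for the point `w` closer to the singularity of the spike. -/
theorem near_estimate_aux {D : E →L[ℂ] E} {a c : ℝ} (hx : ‖x‖ = 1) (ha : 0 < a) (hc : 0 < c)
    (hD : ∀ v, ⟪M x, D v⟫_ℂ = a * ⟪x, v⟫_ℂ)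
    (hM : ∀ v, ⟪x, v⟫_ℂ = 0 → c * ‖v‖ ^ 2 ≤ (⟪M v, D v⟫_ℂ).re) {η : ℝ} (hη : 0 < η)
    (hβ : 0 < β) (hβ1 : β ≤ 1) {z w : E} (hz : ‖z‖ < 1 + β / 2) (hw : ‖w‖ < 1 + β / 2)
    (hzw : ‖ucoord x β w‖ ≤ ‖ucoord x β z‖) :
    ‖z - w‖ ≤ ((7 + 2 * ‖D‖ / a) / c + 2 / a) *
      ‖D (z - w) + (η : ℂ) • (spike M x β z - spike M x β w)‖ := by
  set G := D (z - w) + (η : ℂ) • (spike M x β z - spike M x β w) with hG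
  have huz : 0 < (ucoord x β z).re := by linarith [ucoord_re_pos hx hz]
  have huw : 0 < (ucoord x β w).re := by linarith [ucoord_re_pos hx hw]
  have hpw := norm_perp_sq_le hx hβ hβ1 hw
  have husub : ucoord x β z - ucoord x β w = -⟪x, z - w⟫_ℂ := ucoord_sub z w
  set u := ucoord x β z with hu
  set u' := ucoord x β w with hu'
  set s := csqrt u with hs
  set t := csqrt u' with ht
  have hs2 : s ^ 2 = u := csqrt_sq u
  have ht2 : t ^ 2 = u' := csqrt_sq u'
  have hs0 : s ≠ 0 := csqrt_ne_zero huz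
  have ht0 : t ≠ 0 := csqrt_ne_zero huw
  have hxG : -⟪M x, G⟫_ℂ = (a : ℂ) * (s ^ 2 - t ^ 2) - η * (1 / s - 1 / t) := by
    rw [hG, inner_add_right, hD, inner_smul_right, inner_sub_right (M x), inner_Mx_spike hx,
      inner_Mx_spike hx, hs2, ht2, husub, ← hu, ← hu', ← hs, ← ht]
    simp only [one_div]
    ring
  obtain ⟨e1, e2⟩ := one_dim_estimate ha hη (csqrt_im_le huz) (csqrt_im_le huw)
    (csqrt_re_pos huz) (csqrt_re_pos huw)
  rw [← hs, ← ht, ← hxG, norm_neg] at e1 e2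
  have hGn : ‖⟪M x, G⟫_ℂ‖ ≤ ‖G‖ := norm_inner_le (by rw [M.norm_map, hx]) G
  have e1' : ‖⟪x, z - w⟫_ℂ‖ ≤ 2 / a * ‖G‖ := by
    rw [hs2, ht2, husub, norm_neg] at e1
    rw [div_mul_eq_mul_div, le_div_iff₀ ha]
    linarith
  have e2' : η * ‖1 / s - 1 / t‖ ≤ 3 * ‖G‖ := by linarith
  set v := perp x (z - w) with hv
  have hxv : ⟪x, v⟫_ℂ = 0 := inner_perp hx _
  have hMv : ⟪M v, M x⟫_ℂ = 0 := by
    rw [M.inner_map_map, ← inner_conj_symm, hxv, map_zero]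
  have hzw' : z - w = v + ⟪x, z - w⟫_ℂ • x := by rw [hv, perp]; abel
  have hpz : perp x z = v + perp x w := by rw [hv, ← perp_sub]; abel
  have hGexp : ⟪M v, G⟫_ℂ = ⟪M v, D v⟫_ℂ + ⟪x, z - w⟫_ℂ * ⟪M v, D x⟫_ℂ +
      η * ((2 * u)⁻¹ * ⟪v, v⟫_ℂ + ((2 * u)⁻¹ - (2 * u')⁻¹) * ⟪v, perp x w⟫_ℂ) := by
    have h1 : D (z - w) = D v + ⟪x, z - w⟫_ℂ • D x := by
      conv_lhs => rw [hzw']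
      rw [map_add, map_smul]
    rw [hG, h1, spike, spike, ← hu, ← hu', ← hs, ← ht, hpz]
    simp only [inner_add_right, inner_sub_right, inner_smul_right, hMv, M.inner_map_map, map_add]
    ring
  have hcoer := hM v hxv
  have b1 : (⟪M v, G⟫_ℂ).re ≤ ‖v‖ * ‖G‖ := by
    have := (Complex.re_le_norm _).trans (norm_inner_le_norm (𝕜 := ℂ) (M v) G)
    rwa [M.norm_map] at this
  have b2 : ‖⟪x, z - w⟫_ℂ * ⟪M v, D x⟫_ℂ‖ ≤ 2 / a * ‖G‖ * (‖v‖ * ‖D‖) := by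
    rw [norm_mul]
    have h1 : ‖⟪M v, D x⟫_ℂ‖ ≤ ‖v‖ * ‖D‖ := by
      have h2 := norm_inner_le_norm (𝕜 := ℂ) (M v) (D x)
      have h3 := D.le_opNorm x
      rw [hx, mul_one] at h3
      rw [M.norm_map] at h2
      exact h2.trans (by gcongr)
    gcongr
  have b3 : 0 ≤ ((η : ℂ) * ((2 * u)⁻¹ * ⟪v, v⟫_ℂ)).re := by
    rw [inner_self_eq_norm_sq_to_K]
    have : (η : ℂ) * ((2 * u)⁻¹ * ((‖v‖ : ℝ) : ℂ) ^ 2) = ((η * ‖v‖ ^ 2 / 2 : ℝ) : ℂ) * u⁻¹ := by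
      push_cast; rw [mul_inv]; ring
    have h2 : 0 ≤ (((η * ‖v‖ ^ 2 / 2 : ℝ) : ℂ) * u⁻¹).re := by
      rw [Complex.re_ofReal_mul, Complex.inv_re]
      have := Complex.normSq_nonneg u
      positivity
    rw [← this] at h2
    exact h2
  have b4 : ‖(η : ℂ) * (((2 * u)⁻¹ - (2 * u')⁻¹) * ⟪v, perp x w⟫_ℂ)‖ ≤ 6 * ‖G‖ * ‖v‖ := by
    have h1 : (2 * u)⁻¹ - (2 * u')⁻¹ = (1 / s - 1 / t) * ((1 / s + 1 / t) / 2) := by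
      rw [← hs2, ← ht2]; field_simp; ring
    have hts : ‖t‖ ≤ ‖s‖ := by
      have h2 := norm_csqrt_sq u
      have h3 := norm_csqrt_sq u'
      rw [← hs] at h2
      rw [← ht] at h3
      exact (abs_le_of_sq_le_sq' (by linarith) (norm_nonneg _)).2
    have htp : 0 < ‖t‖ := norm_pos_iff.2 ht0
    have h4 : ‖(1 / s + 1 / t) / 2‖ ≤ 1 / ‖t‖ := by
      rw [norm_div, Complex.norm_two, div_le_iff₀ two_pos]
      refine (norm_add_le _ _).trans ?_
      rw [norm_div, norm_div, norm_one]
      have : 1 / ‖s‖ ≤ 1 / ‖t‖ := one_div_le_one_div_of_le htp hts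
      linarith
    have h5 : ‖perp x w‖ ≤ 2 * ‖t‖ := by
      have h3 := norm_csqrt_sq u'
      rw [← ht] at h3
      refine (abs_le_of_sq_le_sq' ?_ (by positivity)).2
      rw [mul_pow, h3]
      linarith [norm_nonneg u']
    have h6 : ‖⟪v, perp x w⟫_ℂ‖ ≤ ‖v‖ * (2 * ‖t‖) :=
      (norm_inner_le_norm (𝕜 := ℂ) _ _).trans (by gcongr)
    rw [h1, norm_mul, norm_mul, norm_mul, Complex.norm_real, Real.norm_of_nonneg hη.le]
    calc η * (‖1 / s - 1 / t‖ * ‖(1 / s + 1 / t) / 2‖ * ‖⟪v, perp x w⟫_ℂ‖)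
        ≤ η * (‖1 / s - 1 / t‖ * (1 / ‖t‖) * (‖v‖ * (2 * ‖t‖))) := by gcongr
      _ = η * ‖1 / s - 1 / t‖ * (2 * ‖v‖) := by field_simp
      _ ≤ 3 * ‖G‖ * (2 * ‖v‖) := by gcongr
      _ = _ := by ring
  have hmain : c * ‖v‖ ^ 2 ≤ (7 + 2 * ‖D‖ / a) * ‖G‖ * ‖v‖ := by
    rw [mul_add, add_assoc] at hGexp
    rw [hGexp, Complex.add_re, Complex.add_re, Complex.add_re] at b1
    have d2 := (abs_le.1 ((Complex.abs_re_le_norm _).trans b2)).1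
    have d4 := (abs_le.1 ((Complex.abs_re_le_norm _).trans b4)).1
    have : (7 + 2 * ‖D‖ / a) * ‖G‖ * ‖v‖ =
      ‖v‖ * ‖G‖ + 2 / a * ‖G‖ * (‖v‖ * ‖D‖) + 6 * ‖G‖ * ‖v‖ := by ring
    linarith
  have hvle : ‖v‖ ≤ (7 + 2 * ‖D‖ / a) / c * ‖G‖ := by
    rw [div_mul_eq_mul_div, le_div_iff₀ hc]
    rcases (norm_nonneg v).eq_or_lt with h0 | h0
    · rw [← h0, zero_mul]; positivity
    · have : (c * ‖v‖) * ‖v‖ ≤ ((7 + 2 * ‖D‖ / a) * ‖G‖) * ‖v‖ := by nlinarith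
      linarith [le_of_mul_le_mul_right this h0]
  calc ‖z - w‖ = ‖v + ⟪x, z - w⟫_ℂ • x‖ := by rw [← hzw']
    _ ≤ ‖v‖ + ‖⟪x, z - w⟫_ℂ‖ := by
        refine (norm_add_le _ _).trans ?_
        rw [norm_smul, hx, mul_one]
    _ ≤ _ := by rw [add_mul]; refine add_le_add ?_ e1'; exact hvle

/-- The key estimate: adding any positive multiple of the spike to the linear map `D` does not
destroy its expansion constant, uniformly in the parameters `β` and `η`. -/
theorem near_estimate {D : E →L[ℂ] E} {a c : ℝ} (hx : ‖x‖ = 1) (ha : 0 < a) (hc : 0 < c)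
    (hD : ∀ v, ⟪M x, D v⟫_ℂ = a * ⟪x, v⟫_ℂ)
    (hM : ∀ v, ⟪x, v⟫_ℂ = 0 → c * ‖v‖ ^ 2 ≤ (⟪M v, D v⟫_ℂ).re) :
    ∃ C > 0, ∀ β > 0, β ≤ 1 → ∀ η : ℝ, 0 < η → ∀ z w : E, ‖z‖ < 1 + β / 2 → ‖w‖ < 1 + β / 2 →
      ‖z - w‖ ≤ C * ‖D (z - w) + (η : ℂ) • (spike M x β z - spike M x β w)‖ := by
  refine ⟨(7 + 2 * ‖D‖ / a) / c + 2 / a, by positivity, fun β hβ hβ1 η hη z w hz hw => ?_⟩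
  rcases le_total ‖ucoord x β w‖ ‖ucoord x β z‖ with h | h
  · exact near_estimate_aux hx ha hc hD hM hη hβ hβ1 hz hw h
  · have := near_estimate_aux hx ha hc hD hM hη hβ hβ1 hw hz h
    have h2 : D (w - z) + (η : ℂ) • (spike M x β w - spike M x β z) =
        -(D (z - w) + (η : ℂ) • (spike M x β z - spike M x β w)) := by
      rw [← neg_sub z w, map_neg, ← neg_sub (spike M x β z), smul_neg]; abel
    rwa [h2, norm_neg, norm_sub_rev] at this

end Spike

/-! ### Bounds for the spike and the region it sweeps out -/

section Spike2

variable {E : Type*} [NormedAddCommGroup E] [InnerProductSpace ℂ E]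
variable {M : E ≃ₗᵢ[ℂ] E} {x : E} {β : ℝ}

theorem le_csqrt_re {u : ℂ} {σ : ℝ} (hσ : 0 < σ) (hσ1 : σ ≤ 1) (hu : σ ≤ u.re) :
    σ ≤ (csqrt u).re := by
  have h2 := re_sq_sub_im_sq (csqrt u)
  have h1 := csqrt_re_pos (hσ.trans_le hu)
  rw [csqrt_sq] at h2
  refine (abs_le_of_sq_le_sq' ?_ h1.le).2
  nlinarith [sq_nonneg (csqrt u).im]

theorem le_norm_csqrt {u : ℂ} {σ : ℝ} (hσ : 0 < σ) (hσ1 : σ ≤ 1) (hu : σ ≤ u.re) :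
    σ ≤ ‖csqrt u‖ := (le_csqrt_re hσ hσ1 hu).trans (Complex.re_le_norm _)

theorem spike_bound (hx : ‖x‖ = 1) {σ : ℝ} (hσ : 0 < σ) (hσ1 : σ ≤ 1) {z : E} (hz : ‖z‖ ≤ 2)
    (hu : σ ≤ (ucoord x β z).re) : ‖spike M x β z‖ ≤ 2 / σ := by
  have h1 := le_norm_csqrt hσ hσ1 hu
  have h2 : σ ≤ ‖ucoord x β z‖ := hu.trans (Complex.re_le_norm _)
  have h3 := (norm_perp_le hx z).trans hz
  rw [spike]
  refine (norm_add_le _ _).trans ?_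
  rw [norm_smul, norm_smul, M.norm_map, M.norm_map, hx, norm_inv, norm_inv, norm_mul,
    Complex.norm_two]
  have h4 : ‖csqrt (ucoord x β z)‖⁻¹ ≤ σ⁻¹ := inv_anti₀ hσ h1
  have h5 : (2 * ‖ucoord x β z‖)⁻¹ ≤ (2 * σ)⁻¹ := inv_anti₀ (by positivity) (by linarith)
  calc ‖csqrt (ucoord x β z)‖⁻¹ * 1 + (2 * ‖ucoord x β z‖)⁻¹ * ‖perp x z‖
      ≤ σ⁻¹ * 1 + (2 * σ)⁻¹ * 2 := by gcongr
    _ = 2 / σ := by field_simp; norm_num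

theorem spike_lipschitz (hx : ‖x‖ = 1) {σ : ℝ} (hσ : 0 < σ) (hσ1 : σ ≤ 1) {z w : E}
    (hw : ‖w‖ ≤ 2) (hu : σ ≤ (ucoord x β z).re)
    (hu' : σ ≤ (ucoord x β w).re) : ‖spike M x β z - spike M x β w‖ ≤ 3 / σ ^ 2 * ‖z - w‖ := by
  have husub : ucoord x β w - ucoord x β z = ⟪x, z - w⟫_ℂ := by
    rw [← neg_sub, ucoord_sub, neg_neg]
  have hsub : spike M x β z - spike M x β w =
      ((csqrt (ucoord x β z))⁻¹ - (csqrt (ucoord x β w))⁻¹) • M x +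
      ((2 * ucoord x β z)⁻¹ • M (perp x (z - w)) +
        ((2 * ucoord x β z)⁻¹ - (2 * ucoord x β w)⁻¹) • M (perp x w)) := by
    rw [spike, spike, ← perp_sub, map_sub]
    module
  have hpd := norm_perp_le hx (z - w)
  have hin := norm_inner_le hx (z - w)
  set u := ucoord x β z with hueq
  set u' := ucoord x β w with hueq'
  have hs := le_csqrt_re hσ hσ1 hu
  have ht := le_csqrt_re hσ hσ1 hu'
  have hs' := le_norm_csqrt hσ hσ1 hu
  have ht' := le_norm_csqrt hσ hσ1 hu'
  have hs0 : csqrt u ≠ 0 := csqrt_ne_zero (hσ.trans_le hu)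
  have ht0 : csqrt u' ≠ 0 := csqrt_ne_zero (hσ.trans_le hu')
  have hun : σ ≤ ‖u‖ := hu.trans (Complex.re_le_norm _)
  have hun' : σ ≤ ‖u'‖ := hu'.trans (Complex.re_le_norm _)
  have hu0 : u ≠ 0 := norm_pos_iff.1 (hσ.trans_le hun)
  have hu0' : u' ≠ 0 := norm_pos_iff.1 (hσ.trans_le hun')
  have hst : σ ≤ ‖csqrt u * csqrt u'‖ := by
    refine (abs_le_of_sq_le_sq' ?_ (norm_nonneg _)).2
    rw [norm_mul, mul_pow, norm_csqrt_sq, norm_csqrt_sq, sq]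
    gcongr
  have hsum : σ ≤ ‖csqrt u + csqrt u'‖ := by
    refine le_trans ?_ (Complex.re_le_norm _)
    rw [Complex.add_re]; linarith
  have hsum0 : csqrt u + csqrt u' ≠ 0 := norm_pos_iff.1 (hσ.trans_le hsum)
  have e1 : ‖(csqrt u)⁻¹ - (csqrt u')⁻¹‖ ≤ ‖z - w‖ / σ ^ 2 := by
    have h1 : (csqrt u)⁻¹ - (csqrt u')⁻¹ =
        (u' - u) / ((csqrt u * csqrt u') * (csqrt u + csqrt u')) := by
      rw [eq_div_iff (by positivity)]
      conv_rhs => rw [← csqrt_sq u, ← csqrt_sq u']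
      field_simp
      ring
    rw [h1, husub, norm_div, norm_mul _ (_ + _)]
    gcongr
    rw [sq]; gcongr
  have e2 : ‖(2 * u)⁻¹‖ ≤ 1 / (2 * σ ^ 2) := by
    rw [norm_inv, norm_mul, Complex.norm_two, one_div]
    apply inv_anti₀ (by positivity)
    nlinarith
  have e3 : ‖(2 * u)⁻¹ - (2 * u')⁻¹‖ ≤ ‖z - w‖ / (2 * σ ^ 2) := by
    have h1 : (2 * u)⁻¹ - (2 * u')⁻¹ = (u' - u) / (2 * (u * u')) := by
      field_simp
    rw [h1, husub, norm_div, norm_mul 2, norm_mul u, Complex.norm_two, sq]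
    gcongr
  have hpw := (norm_perp_le hx w).trans hw
  rw [hsub]
  refine (norm_add_le _ _).trans ((add_le_add_right (norm_add_le _ _) _).trans ?_)
  rw [norm_smul, norm_smul, norm_smul, M.norm_map, M.norm_map, M.norm_map, hx]
  calc ‖(csqrt u)⁻¹ - (csqrt u')⁻¹‖ * 1 + (‖(2 * u)⁻¹‖ * ‖perp x (z - w)‖ +
        ‖(2 * u)⁻¹ - (2 * u')⁻¹‖ * ‖perp x w‖)
      ≤ ‖z - w‖ / σ ^ 2 * 1 + (1 / (2 * σ ^ 2) * ‖z - w‖ + ‖z - w‖ / (2 * σ ^ 2) * 2) := by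
        gcongr
    _ = 5 / 2 / σ ^ 2 * ‖z - w‖ := by field_simp; norm_num
    _ ≤ _ := by gcongr; norm_num

theorem analyticAt_spike {z : E} (hu : 0 < (ucoord x β z).re) : AnalyticAt ℂ (spike M x β) z := by
  have h0 : AnalyticAt ℂ (fun z => ⟪x, z⟫_ℂ) z := (innerSL ℂ x).analyticAt z
  have h1 : AnalyticAt ℂ (ucoord x β) z := by
    unfold ucoord
    exact analyticAt_const.sub h0
  have hne : ucoord x β z ≠ 0 := fun h => by simp [h] at hu
  have h2 : AnalyticAt ℂ (fun z => csqrt (ucoord x β z)) z := by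
    unfold csqrt
    exact h1.cpow analyticAt_const (Complex.mem_slitPlane_iff.2 (Or.inl hu))
  have h3 : AnalyticAt ℂ (fun z => M (perp x z)) z := by
    refine ((M : E ≃L[ℂ] E) : E →L[ℂ] E).analyticAt _ |>.comp ?_
    unfold perp
    exact analyticAt_id.sub (h0.smul analyticAt_const)
  unfold spike
  refine ((h2.inv (csqrt_ne_zero hu)).smul analyticAt_const).add
    (((analyticAt_const.mul h1).inv ?_).smul h3)
  simpa using hne

/-- The closed region swept out by the spike: vectors `ζ n + w'` with `w'` orthogonal to `n`,
`|ζ| ≤ ρ / 2`, `|arg ζ| ≤ π / 4` and `‖w'‖ ≤ (√3 / 2) |ζ|`. It meets the complement of the open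
ball of radius `ρ` centred at `ρ n` only at the origin. -/
def horn (n : E) (ρ : ℝ) : Set E :=
  {q | ‖⟪n, q⟫_ℂ‖ ≤ ρ / 2 ∧ |(⟪n, q⟫_ℂ).im| ≤ (⟪n, q⟫_ℂ).re ∧
    4 * ‖perp n q‖ ^ 2 ≤ 3 * ‖⟪n, q⟫_ℂ‖ ^ 2}

theorem isClosed_horn (n : E) (ρ : ℝ) : IsClosed (horn n ρ) := by
  have h1 : Continuous fun q : E => ⟪n, q⟫_ℂ := by fun_prop
  have h2 : Continuous fun q : E => perp n q := by unfold perp; fun_prop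
  unfold horn
  exact (isClosed_le h1.norm continuous_const).inter
    ((isClosed_le (Complex.continuous_im.comp h1).abs (Complex.continuous_re.comp h1)).inter
      (isClosed_le (continuous_const.mul (h2.norm.pow 2)) (continuous_const.mul (h1.norm.pow 2))))

theorem zero_mem_horn (n : E) {ρ : ℝ} (hρ : 0 < ρ) : (0 : E) ∈ horn n ρ := by
  simp only [horn, perp, mem_ofPred_eq, inner_zero_right]
  simp
  positivity

theorem horn_dist {n : E} (hn : ‖n‖ = 1) {ρ : ℝ} (hρ : 0 < ρ) {q : E} (hq : q ∈ horn n ρ) :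
    q = 0 ∨ ‖q - (ρ : ℂ) • n‖ < ρ := by
  obtain ⟨h1, h2, h3⟩ := hq
  set ζ := ⟪n, q⟫_ℂ with hζ
  have hqe : q = ζ • n + perp n q := by rw [perp, hζ]; abel
  have hnorm : ‖q‖ ^ 2 = ‖ζ‖ ^ 2 + ‖perp n q‖ ^ 2 := norm_sq_perp hn q
  have hsq : ‖ζ‖ ^ 2 = ζ.re ^ 2 + ζ.im ^ 2 := by
    rw [← Complex.normSq_eq_norm_sq, Complex.normSq_apply]; ring
  have him : ζ.im ^ 2 ≤ ζ.re ^ 2 := sq_le_sq.2 (h2.trans (le_abs_self _))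
  have hre0 : 0 ≤ ζ.re := (abs_nonneg _).trans h2
  have hz0 := norm_nonneg ζ
  rcases hre0.eq_or_lt with h0 | h0
  · left
    have : ‖ζ‖ ^ 2 = 0 := by nlinarith [sq_nonneg ζ.im]
    have h5 : ‖q‖ ^ 2 ≤ 0 := by nlinarith
    have h6 : ‖q‖ = 0 := by nlinarith [norm_nonneg q]
    exact norm_eq_zero.1 h6
  · right
    have he : q - (ρ : ℂ) • n = (ζ - ρ) • n + perp n q := by
      conv_lhs => rw [hqe]
      module
    have h7 : ‖q - (ρ : ℂ) • n‖ ^ 2 = ‖ζ - ρ‖ ^ 2 + ‖perp n q‖ ^ 2 := by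
      rw [he, norm_sq_smul_add hn _ (inner_perp hn q)]
    have h8 : ‖ζ - ρ‖ ^ 2 = (ζ.re - ρ) ^ 2 + ζ.im ^ 2 := by
      rw [← Complex.normSq_eq_norm_sq, Complex.normSq_apply]
      simp only [Complex.sub_re, Complex.sub_im, Complex.ofReal_re, Complex.ofReal_im]
      ring
    have h9 : ‖ζ‖ ≤ 3 / 2 * ζ.re := by
      refine (abs_le_of_sq_le_sq' ?_ (by positivity)).2
      nlinarith
    have h10 : ‖q - (ρ : ℂ) • n‖ ^ 2 < ρ ^ 2 := by
      rw [h7, h8]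
      have h11 : ‖ζ‖ ^ 2 ≤ ρ / 2 * (3 / 2 * ζ.re) := by
        rw [sq]; gcongr
      nlinarith [mul_pos hρ h0]
    exact (abs_lt_of_sq_lt_sq' h10 hρ.le).2

/-- With `8 η² = β ρ²` the scaled spike stays in the horn; its orthogonal part is controlled by
`norm_perp_sq_le`. -/
theorem spike_mem_horn (hx : ‖x‖ = 1) {ρ η : ℝ} (hρ : 0 < ρ) (hη : 0 < η)
    (hβ : 8 * η ^ 2 = β * ρ ^ 2) (hβ1 : β ≤ 1) {z : E} (hz : ‖z‖ < 1 + β / 2) :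
    (η : ℂ) • spike M x β z ∈ horn (M x) ρ := by
  have hβ0 : 0 < β := by
    by_contra h
    push Not at h
    have : 0 < 8 * η ^ 2 := by positivity
    nlinarith [sq_nonneg ρ]
  have hur := ucoord_re_pos hx hz
  have hp := norm_perp_sq_le hx hβ0 hβ1 hz
  set u := ucoord x β z with hu
  have hu0 : 0 < u.re := by linarith
  have hun : β / 2 < ‖u‖ := hur.trans_le (Complex.re_le_norm _)
  have hin : ⟪M x, (η : ℂ) • spike M x β z⟫_ℂ = (η : ℂ) * (csqrt u)⁻¹ := by
    rw [inner_smul_right, inner_Mx_spike hx]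
  have hMx : ‖M x‖ = 1 := by rw [M.norm_map, hx]
  have hperp : perp (M x) ((η : ℂ) • spike M x β z) = ((η : ℂ) * (2 * u)⁻¹) • M (perp x z) := by
    rw [perp, hin, spike, ← hu]
    module
  have hsn : ‖csqrt u‖ ^ 2 = ‖u‖ := norm_csqrt_sq u
  have hn2 : ‖(η : ℂ) * (csqrt u)⁻¹‖ ^ 2 = η ^ 2 / ‖u‖ := by
    rw [norm_mul, norm_inv, mul_pow, inv_pow, hsn, Complex.norm_real, Real.norm_of_nonneg hη.le,
      div_eq_mul_inv]
  have hupos : 0 < ‖u‖ := by linarith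
  refine ⟨?_, ?_, ?_⟩
  · rw [hin]
    refine (abs_le_of_sq_le_sq' ?_ (by positivity)).2
    rw [hn2, div_le_iff₀ hupos]
    nlinarith [sq_nonneg ρ, mul_pos hρ hρ]
  · rw [hin, Complex.re_ofReal_mul, Complex.im_ofReal_mul, Complex.inv_re, Complex.inv_im, abs_mul,
      abs_of_pos hη, abs_div, abs_neg, abs_of_nonneg (Complex.normSq_nonneg _)]
    have := csqrt_im_le hu0
    have := Complex.normSq_nonneg (csqrt u)
    gcongr
  · rw [hperp, hin, hn2, norm_smul, M.norm_map, mul_pow, norm_mul, norm_inv, norm_mul,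
      Complex.norm_two, Complex.norm_real, Real.norm_of_nonneg hη.le]
    calc 4 * ((η * (2 * ‖u‖)⁻¹) ^ 2 * ‖perp x z‖ ^ 2)
        ≤ 4 * ((η * (2 * ‖u‖)⁻¹) ^ 2 * (3 * ‖u‖)) := by gcongr
      _ = 3 * (η ^ 2 / ‖u‖) := by field_simp; norm_num

end Spike2

/-! ### Adding a spike preserves injectivity -/

section Core

variable {E : Type*} [NormedAddCommGroup E] [InnerProductSpace ℂ E] [FiniteDimensional ℂ E]

/-- `f` is analytic and expands distances by a definite factor on a neighbourhood of the closed
ball of radius `r`. -/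
def Good (f : E → E) (r : ℝ) : Prop :=
  ∃ r' > r, AnalyticOnNhd ℂ f (ball 0 r') ∧
    ∃ c > 0, ∀ z ∈ ball (0 : E) r', ∀ w ∈ ball (0 : E) r', c * ‖z - w‖ ≤ ‖f z - f w‖

theorem norm_sub_sq_le {x z : E} {b S : ℝ} (hx : ‖x‖ = 1) (hb : 0 ≤ b) (hb1 : b ≤ 1)
    (hz : ‖z‖ < 1 + b / 2) (hS : 1 - S ≤ (⟪x, z⟫_ℂ).re) : ‖z - x‖ ^ 2 ≤ 2 * b + 2 * S := by
  have h1 := @norm_sub_sq ℂ E _ _ _ z x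
  have h2 : RCLike.re ⟪z, x⟫_ℂ = (⟪x, z⟫_ℂ).re := by
    rw [← inner_conj_symm]; exact Complex.conj_re _
  rw [h2, hx] at h1
  have h3 := norm_nonneg z
  rw [h1]
  nlinarith

theorem eventually_params {ρ κ : ℝ} (hρ : 0 < ρ) (hκ : 0 < κ) :
    ∀ᶠ η : ℝ in 𝓝[>] 0, 0 < η ∧ η < κ ∧ 0 < 8 * η ^ 2 / ρ ^ 2 ∧ 8 * η ^ 2 / ρ ^ 2 < κ := by
  have h1 : Tendsto (fun η : ℝ => 8 * η ^ 2 / ρ ^ 2) (𝓝[>] 0) (𝓝 0) := by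
    have : Continuous fun η : ℝ => 8 * η ^ 2 / ρ ^ 2 := by fun_prop
    have := this.tendsto 0
    simp only [ne_eq, OfNat.ofNat_ne_zero, not_false_eq_true, zero_pow, mul_zero, zero_div] at this
    exact this.mono_left nhdsWithin_le_nhds
  filter_upwards [self_mem_nhdsWithin, nhdsWithin_le_nhds (gt_mem_nhds hκ),
    h1.eventually (gt_mem_nhds hκ)] with η h2 h3 h4
  have h2 : 0 < η := h2
  exact ⟨h2, h3, by positivity, h4⟩

set_option maxHeartbeats 1000000 in
/-- Adding the spike with small `η` and `β = 8 η² / ρ²` keeps the map expanding. For two points near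
`x` this is `near_estimate`; for two points away from `x` the spike has a small Lipschitz constant;
and if one point is near `x` and the other is not, their images are separated because the horn at
`f x` meets `f '' closedBall 0 1` only at `f x`. -/
theorem core_perturb {f : E → E} {r c a c₁ ρ ε : ℝ} {x y : E} {M : E ≃ₗᵢ[ℂ] E} (hr : 1 < r)
    (hc : 0 < c) (hf : AnalyticOnNhd ℂ f (ball 0 r))
    (hanti : ∀ z ∈ ball (0 : E) r, ∀ w ∈ ball (0 : E) r, c * ‖z - w‖ ≤ ‖f z - f w‖)
    (hρ : infDist y (f '' closedBall 0 1) = ρ) (hρ0 : 0 < ρ) (hx : ‖x‖ = 1) (ha : 0 < a)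
    (hc₁ : 0 < c₁) (hy : y = f x + (ρ : ℂ) • M x)
    (hD : ∀ v, ⟪M x, fderiv ℂ f x v⟫_ℂ = a * ⟪x, v⟫_ℂ)
    (hM : ∀ v, ⟪x, v⟫_ℂ = 0 → c₁ * ‖v‖ ^ 2 ≤ (⟪M v, fderiv ℂ f x v⟫_ℂ).re) (hε : 0 < ε) :
    ∀ᶠ η : ℝ in 𝓝[>] 0,
      Good (fun z => f z + (η : ℂ) • spike M x (8 * η ^ 2 / ρ ^ 2) z) 1 ∧
      (∀ z, ‖z‖ ≤ 1 - ε → ‖(η : ℂ) • spike M x (8 * η ^ 2 / ρ ^ 2) z‖ ≤ ε) ∧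
      ∀ z, ‖z‖ ≤ 1 → ∃ q ∈ f '' closedBall 0 1 ∪ closedBall y ρ,
        ‖f z + (η : ℂ) • spike M x (8 * η ^ 2 / ρ ^ 2) z - q‖ ≤ ε := by
  have : ProperSpace E := FiniteDimensional.proper ℂ E
  have hMx : ‖M x‖ = 1 := by rw [M.norm_map, hx]
  have hxr : x ∈ ball (0 : E) r := by rw [mem_ball_zero_iff, hx]; exact hr
  obtain ⟨C, hC, hnear⟩ := near_estimate hx ha hc₁ hD hM
  set D := fderiv ℂ f x with hDdef
  -- scale on which `f` is well approximated by its derivative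
  obtain ⟨δ, hδ, hδf⟩ : ∃ δ > 0, ∀ z ∈ ball x δ, ∀ w ∈ ball x δ,
      ‖f z - f w - D (z - w)‖ ≤ 1 / (2 * C) * ‖z - w‖ := by
    have hstrict : HasStrictFDerivAt f D x := (hf x hxr).hasStrictFDerivAt
    have hCpos : 0 < 1 / (2 * C) := by positivity
    obtain ⟨s, hs, happ⟩ := hstrict.approximates_deriv_on_nhds
      (c := ⟨1 / (2 * C), hCpos.le⟩) (Or.inr hCpos)
    obtain ⟨δ, hδ, hball⟩ := Metric.mem_nhds_iff.1 hs
    exact ⟨δ, hδ, fun z hz w hw => happ z (hball hz) w (hball hw)⟩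
  set S := min 1 (δ ^ 2 / 8) with hS
  have hS0 : 0 < S := by positivity
  have hS1 : S ≤ 1 := min_le_left _ _
  have hS2 : S ≤ δ ^ 2 / 8 := min_le_right _ _
  -- away from `x`, the image of `f` keeps a distance `d` from the horn at `f x`
  obtain ⟨d, hd, hdf⟩ : ∃ d > 0, ∀ z : E, ‖z‖ < 1 + d → ‖z‖ ≤ (1 + r) / 2 →
      (⟪x, z⟫_ℂ).re ≤ 1 - S → ∀ q ∈ horn (M x) ρ, d ≤ ‖f z - f x - q‖ := by
    set Kc : Set E := closedBall 0 ((1 + r) / 2) ∩ {z | (⟪x, z⟫_ℂ).re ≤ 1 - S} with hKc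
    have hKcpt : IsCompact Kc := by
      refine (isCompact_closedBall _ _).inter_right (isClosed_le ?_ continuous_const)
      exact Complex.continuous_re.comp (by fun_prop)
    have hKr : Kc ⊆ ball 0 r := fun z hz =>
      closedBall_subset_ball (by linarith) hz.1
    have hcont : ContinuousOn (fun z => max (‖z‖ - 1) 0 + infDist (f z - f x) (horn (M x) ρ))
        Kc := by
      have h1 : ContinuousOn f Kc := hf.continuousOn.mono hKr
      refine ContinuousOn.add (by fun_prop) ?_
      exact (continuous_infDist_pt _).comp_continuousOn (h1.sub continuousOn_const)
    obtain ⟨b, hb, hbK⟩ := hKcpt.exists_forall_le' hcont (a := 0) (by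
      intro z hz
      have hi := infDist_nonneg (x := f z - f x) (s := horn (M x) ρ)
      rcases lt_or_ge 1 ‖z‖ with h | h
      · have := le_max_left (‖z‖ - 1) 0
        linarith
      · have h2 : 0 < infDist (f z - f x) (horn (M x) ρ) := by
          refine ((isClosed_horn (M x) ρ).notMem_iff_infDist_pos
            ⟨0, zero_mem_horn (M x) hρ0⟩).1 fun hmem => ?_
          rcases horn_dist hMx hρ0 hmem with h3 | h3
          · have h4 := hanti z (hKr hz) x hxr
            rw [h3, norm_zero] at h4
            have h5 : ‖z - x‖ = 0 := by nlinarith [norm_nonneg (z - x)]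
            have h6 : z = x := sub_eq_zero.1 (norm_eq_zero.1 h5)
            have h7 : (⟪x, z⟫_ℂ).re ≤ 1 - S := hz.2
            rw [h6, inner_self_one hx, Complex.one_re] at h7
            linarith
          · have h4 : ρ ≤ dist y (f z) := hρ ▸ infDist_le_dist_of_mem
              (mem_image_of_mem f (mem_closedBall_zero_iff.2 h))
            rw [dist_comm, dist_eq_norm, hy, ← sub_sub] at h4
            linarith
        have := le_max_right (‖z‖ - 1) 0
        linarith)
    refine ⟨b / 2, by positivity, fun z hz hz2 hzS q hq => ?_⟩
    have h1 := hbK z ⟨mem_closedBall_zero_iff.2 hz2, hzS⟩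
    have h2 : infDist (f z - f x) (horn (M x) ρ) ≤ ‖f z - f x - q‖ := by
      rw [← dist_eq_norm]; exact infDist_le_dist_of_mem hq
    have h3 : max (‖z‖ - 1) 0 ≤ b / 2 := max_le (by linarith) (by positivity)
    linarith
  obtain ⟨δ₂, hδ₂, hδ₂f⟩ : ∃ δ₂ > 0, ∀ z, ‖z - x‖ < δ₂ → ‖f z - f x‖ < min (d / 4) ε := by
    have := Metric.continuousAt_iff.1 (hf x hxr).continuousAt (min (d / 4) ε) (by positivity)
    obtain ⟨δ₂, h, h'⟩ := this
    refine ⟨δ₂, h, fun z hz => ?_⟩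
    rw [← dist_eq_norm] at hz ⊢
    exact h' hz
  set σ := min S (δ₂ ^ 2 / 8) with hσ
  have hσ0 : 0 < σ := by positivity
  have hσS : σ ≤ S := min_le_left _ _
  have hσ2 : σ ≤ δ₂ ^ 2 / 8 := min_le_right _ _
  have hσ1 : σ ≤ 1 := hσS.trans hS1
  set ε₁ := min ε 1 with hε₁
  have hε₁0 : 0 < ε₁ := by positivity
  have k1 : 0 < δ ^ 2 / 8 := by positivity
  have k2 : 0 < δ₂ ^ 2 / 8 := by positivity
  have k3 : 0 < r - 1 := by linarith
  have k4 : 0 < c / 2 / (3 / σ ^ 2) := by positivity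
  have k5 : 0 < min ε (d / 4) / (2 / σ) := by positivity
  have k6 : 0 < ε / (2 / ε₁) := by positivity
  filter_upwards [eventually_params hρ0 one_pos, eventually_params hρ0 k1, eventually_params hρ0 k2,
    eventually_params hρ0 k3, eventually_params hρ0 k4, eventually_params hρ0 k5,
    eventually_params hρ0 k6, eventually_params hρ0 hd] with η p0 p1 p2 p3 p4 p5 p6 p7
  obtain ⟨hη, -, hβ, hβ1⟩ := p0
  have hηβ : 8 * η ^ 2 = 8 * η ^ 2 / ρ ^ 2 * ρ ^ 2 := by field_simp
  set β := 8 * η ^ 2 / ρ ^ 2 with hβdef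
  have q1 : β < δ ^ 2 / 8 := p1.2.2.2
  have q2 : β < δ₂ ^ 2 / 8 := p2.2.2.2
  have q3 : β < r - 1 := p3.2.2.2
  have q4 : η * (3 / σ ^ 2) ≤ c / 2 := ((lt_div_iff₀ (by positivity)).1 p4.2.1).le
  have q5 : η * (2 / σ) ≤ min ε (d / 4) := ((lt_div_iff₀ (by positivity)).1 p5.2.1).le
  have q6 : η * (2 / ε₁) ≤ ε := ((lt_div_iff₀ (by positivity)).1 p6.2.1).le
  have q7 : β < d := p7.2.2.2
  have hηn : ∀ v : E, ‖(η : ℂ) • v‖ = η * ‖v‖ := fun v => by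
    rw [norm_smul, Complex.norm_real, Real.norm_of_nonneg hη.le]
  have hfar : ∀ z : E, ‖z‖ < 1 + β / 2 → (⟪x, z⟫_ℂ).re ≤ 1 - σ →
      ‖(η : ℂ) • spike M x β z‖ ≤ min ε (d / 4) := by
    intro z hz hzσ
    rw [hηn]
    have h1 : ‖spike M x β z‖ ≤ 2 / σ := spike_bound hx hσ0 hσ1 (by linarith) (by
      rw [ucoord_re]; linarith)
    exact (mul_le_mul_of_nonneg_left h1 hη.le).trans q5
  have hclose : ∀ z : E, ‖z‖ < 1 + β / 2 → 1 - σ ≤ (⟪x, z⟫_ℂ).re →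
      ‖f z - f x‖ < min (d / 4) ε := by
    intro z hz hzσ
    apply hδ₂f
    have h1 := norm_sub_sq_le hx hβ.le hβ1.le hz hzσ
    exact (abs_lt_of_sq_lt_sq' (by nlinarith [mul_pos hδ₂ hδ₂]) hδ₂.le).2
  have hhorn : ∀ z : E, ‖z‖ < 1 + β / 2 → (η : ℂ) • spike M x β z ∈ horn (M x) ρ :=
    fun z hz => spike_mem_horn hx hρ0 hη hηβ hβ1.le hz
  have hcross : ∀ z w : E, ‖z‖ < 1 + β / 2 → ‖w‖ < 1 + β / 2 → (⟪x, z⟫_ℂ).re < 1 - S →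
      1 - σ < (⟪x, w⟫_ℂ).re → d / 8 * ‖z - w‖ ≤
        ‖(f z + (η : ℂ) • spike M x β z) - (f w + (η : ℂ) • spike M x β w)‖ := by
    intro z w hz hw hzS hwσ
    have h1 := hdf z (by linarith) (by linarith) hzS.le _ (hhorn w hw)
    have h2 := (hfar z hz (by linarith)).trans (min_le_right _ _)
    have h3 := (hclose w hw hwσ.le).le.trans (min_le_left _ _)
    have h4 : f z - f x - (η : ℂ) • spike M x β w =
        ((f z + (η : ℂ) • spike M x β z) - (f w + (η : ℂ) • spike M x β w)) +
          ((f w - f x) - (η : ℂ) • spike M x β z) := by abel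
    have h5 := (norm_add_le ((f z + (η : ℂ) • spike M x β z) - (f w + (η : ℂ) • spike M x β w))
      ((f w - f x) - (η : ℂ) • spike M x β z)).trans
        (add_le_add_right (norm_sub_le (f w - f x) ((η : ℂ) • spike M x β z)) _)
    rw [← h4] at h5
    have h6 := norm_sub_le z w
    have h7 : d / 8 * ‖z - w‖ ≤ d / 8 * 4 := by gcongr; linarith
    linarith
  refine ⟨⟨1 + β / 2, by linarith, ?_, min (1 / (2 * C)) (min (c / 2) (d / 8)), by positivity, ?_⟩,
    ?_, ?_⟩
  · intro z hz
    have hz' := mem_ball_zero_iff.1 hz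
    refine (hf z (mem_ball_zero_iff.2 (by linarith))).add (analyticAt_const.smul ?_)
    exact analyticAt_spike (by linarith [ucoord_re_pos hx hz'])
  · intro z hz w hw
    rw [mem_ball_zero_iff] at hz hw
    have hzr : z ∈ ball (0 : E) r := mem_ball_zero_iff.2 (by linarith)
    have hwr : w ∈ ball (0 : E) r := mem_ball_zero_iff.2 (by linarith)
    have hrw : (f z + (η : ℂ) • spike M x β z) - (f w + (η : ℂ) • spike M x β w) =
        (f z - f w) + (η : ℂ) • (spike M x β z - spike M x β w) := by rw [smul_sub]; abel
    have hn0 := norm_nonneg (z - w)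
    rcases le_or_gt (1 - S) (⟪x, z⟫_ℂ).re with hzA | hzA <;>
      rcases le_or_gt (1 - S) (⟪x, w⟫_ℂ).re with hwA | hwA
    · -- both points near `x`
      have hzx : z ∈ ball x δ := by
        have h1 := norm_sub_sq_le hx hβ.le hβ1.le hz hzA
        rw [mem_ball, dist_eq_norm]
        exact (abs_lt_of_sq_lt_sq' (by nlinarith [mul_pos hδ hδ]) hδ.le).2
      have hwx : w ∈ ball x δ := by
        have h1 := norm_sub_sq_le hx hβ.le hβ1.le hw hwA
        rw [mem_ball, dist_eq_norm]
        exact (abs_lt_of_sq_lt_sq' (by nlinarith [mul_pos hδ hδ]) hδ.le).2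
      have h1 := hnear β hβ hβ1.le η hη z w hz hw
      have h2 := hδf z hzx w hwx
      have h3 : D (z - w) + (η : ℂ) • (spike M x β z - spike M x β w) =
          ((f z + (η : ℂ) • spike M x β z) - (f w + (η : ℂ) • spike M x β w)) -
            (f z - f w - D (z - w)) := by rw [hrw]; abel
      have h4 := norm_sub_le
        ((f z + (η : ℂ) • spike M x β z) - (f w + (η : ℂ) • spike M x β w))
        (f z - f w - D (z - w))
      rw [← h3] at h4
      set N := ‖(f z + (η : ℂ) • spike M x β z) - (f w + (η : ℂ) • spike M x β w)‖ with hN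
      have h5 : ‖z - w‖ ≤ C * (N + 1 / (2 * C) * ‖z - w‖) :=
        h1.trans (mul_le_mul_of_nonneg_left (h4.trans (by linarith)) hC.le)
      have h6 : C * (N + 1 / (2 * C) * ‖z - w‖) = C * N + ‖z - w‖ / 2 := by field_simp
      rw [h6] at h5
      calc min (1 / (2 * C)) (min (c / 2) (d / 8)) * ‖z - w‖ ≤ 1 / (2 * C) * ‖z - w‖ := by
            gcongr; exact min_le_left _ _
        _ ≤ N := by
            rw [div_mul_eq_mul_div, div_le_iff₀ (by positivity)]; linarith
    all_goals
      have hm1 : min (1 / (2 * C)) (min (c / 2) (d / 8)) ≤ c / 2 :=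
        (min_le_right _ _).trans (min_le_left _ _)
      have hm2 : min (1 / (2 * C)) (min (c / 2) (d / 8)) ≤ d / 8 :=
        (min_le_right _ _).trans (min_le_right _ _)
      have hboth : (⟪x, z⟫_ℂ).re ≤ 1 - σ → (⟪x, w⟫_ℂ).re ≤ 1 - σ →
          min (1 / (2 * C)) (min (c / 2) (d / 8)) * ‖z - w‖ ≤
          ‖(f z + (η : ℂ) • spike M x β z) - (f w + (η : ℂ) • spike M x β w)‖ := by
        intro hzσ hwσ
        have h1 : ‖spike M x β z - spike M x β w‖ ≤ 3 / σ ^ 2 * ‖z - w‖ :=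
          spike_lipschitz hx hσ0 hσ1 (by linarith) (by rw [ucoord_re]; linarith)
            (by rw [ucoord_re]; linarith)
        have h2 := hanti z hzr w hwr
        have h3 : ‖(η : ℂ) • (spike M x β z - spike M x β w)‖ ≤ c / 2 * ‖z - w‖ := by
          rw [hηn]
          calc η * ‖spike M x β z - spike M x β w‖ ≤ η * (3 / σ ^ 2 * ‖z - w‖) := by gcongr
            _ = η * (3 / σ ^ 2) * ‖z - w‖ := by ring
            _ ≤ _ := by gcongr
        have h4 := norm_sub_norm_le (f z - f w) (-((η : ℂ) • (spike M x β z - spike M x β w)))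
        rw [norm_neg, sub_neg_eq_add, ← hrw] at h4
        have h5 := mul_le_mul_of_nonneg_right hm1 hn0
        linarith
    · rcases le_or_gt (⟪x, z⟫_ℂ).re (1 - σ) with h | h
      · exact hboth h (by linarith)
      · have := hcross w z hw hz hwA h
        rw [norm_sub_rev w z, norm_sub_rev (f w + _)] at this
        exact (mul_le_mul_of_nonneg_right hm2 hn0).trans this
    · rcases le_or_gt (⟪x, w⟫_ℂ).re (1 - σ) with h | h
      · exact hboth (by linarith) h
      · exact (mul_le_mul_of_nonneg_right hm2 hn0).trans (hcross z w hz hw hzA h)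
    · exact hboth (by linarith) (by linarith)
  · intro z hz
    rw [hηn]
    have hre := (Complex.re_le_norm _).trans (norm_inner_le hx z)
    have h1 : ‖spike M x β z‖ ≤ 2 / ε₁ := spike_bound hx hε₁0 (min_le_right _ _) (by linarith) (by
      rw [ucoord_re]
      linarith [min_le_left ε 1])
    exact (mul_le_mul_of_nonneg_left h1 hη.le).trans q6
  · intro z hz
    have hz' : ‖z‖ < 1 + β / 2 := by linarith
    rcases le_or_gt (⟪x, z⟫_ℂ).re (1 - σ) with h | h
    · refine ⟨f z, Or.inl (mem_image_of_mem f (mem_closedBall_zero_iff.2 hz)), ?_⟩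
      rw [add_sub_cancel_left]
      exact (hfar z hz' h).trans (min_le_left _ _)
    · refine ⟨f x + (η : ℂ) • spike M x β z, Or.inr ?_, ?_⟩
      · rw [mem_closedBall, dist_eq_norm, hy]
        have h1 : f x + (η : ℂ) • spike M x β z - (f x + (ρ : ℂ) • M x) =
          (η : ℂ) • spike M x β z - (ρ : ℂ) • M x := by abel
        rw [h1]
        rcases horn_dist hMx hρ0 (hhorn z hz') with h2 | h2
        · rw [h2, zero_sub, norm_neg, norm_smul, hMx, mul_one, Complex.norm_real,
            Real.norm_of_nonneg hρ0.le]
        · exact h2.le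
      · rw [add_sub_add_right_eq_sub]
        exact (hclose z hz' h.le).le.trans (min_le_right _ _)

end Core

/-! ### One extension step -/

section Core2

variable {E : Type*} [NormedAddCommGroup E] [InnerProductSpace ℂ E] [FiniteDimensional ℂ E]

theorem inv_sq_bounds {k : ℂ} (hk : ‖k - 1‖ ≤ 1 / 10) :
    0 < k.re ∧ 1 / 2 ≤ ((k ^ 2)⁻¹).re ∧ ‖(k ^ 2)⁻¹‖ ≤ 5 / 4 := by
  have h1 := (Complex.abs_re_le_norm _).trans hk
  have h2 := (Complex.abs_im_le_norm _).trans hk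
  rw [Complex.sub_re, Complex.one_re, abs_le] at h1
  rw [Complex.sub_im, Complex.one_im, sub_zero, abs_le] at h2
  have h3 : 9 / 10 ≤ ‖k‖ := by
    have := norm_sub_norm_le (1 : ℂ) (1 - k)
    rw [norm_one, sub_sub_cancel, norm_sub_rev] at this
    linarith
  have h4 : ‖k‖ ≤ 11 / 10 := by
    have := norm_add_le (k - 1) 1
    rw [norm_one, sub_add_cancel] at this
    linarith
  have h5 : 81 / 100 ≤ ‖k ^ 2‖ := by rw [norm_pow]; nlinarith
  have h6 : ‖k ^ 2‖ ≤ 121 / 100 := by rw [norm_pow]; nlinarith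
  refine ⟨by linarith, ?_, ?_⟩
  · rw [Complex.inv_re, Complex.normSq_eq_norm_sq, re_sq_sub_im_sq, le_div_iff₀ (by positivity)]
    nlinarith
  · rw [norm_inv, inv_le_comm₀ (by positivity) (by norm_num)]
    linarith

/-- The perturbed image contains a ball of radius `ρ / 120` along the spike. There the map
`z ↦ f x + η spike z` has an explicit holomorphic right inverse `h`, and `f ∘ h` is close to `f x`,
so the composite of the perturbed map with `h` is a small perturbation of a translation, to which
`stability` applies. -/
theorem core_fill {f : E → E} {r ρ : ℝ} {x : E} {M : E ≃ₗᵢ[ℂ] E} (hr : 1 < r)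
    (hf : AnalyticOnNhd ℂ f (ball 0 r)) (hρ0 : 0 < ρ) (hx : ‖x‖ = 1) :
    ∀ᶠ η : ℝ in 𝓝[>] 0, closedBall (f x + ((ρ / 6 : ℝ) : ℂ) • M x) (ρ / 120) ⊆
      (fun z => f z + (η : ℂ) • spike M x (8 * η ^ 2 / ρ ^ 2) z) '' closedBall 0 1 := by
  have hMx : ‖M x‖ = 1 := by rw [M.norm_map, hx]
  have hxr : x ∈ ball (0 : E) r := by rw [mem_ball_zero_iff, hx]; exact hr
  set n := M x with hn
  set q := f x + ((ρ / 6 : ℝ) : ℂ) • n with hq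
  obtain ⟨e, he, hstab⟩ := stability (E := E) (f := fun v => q + v) (r := ρ / 120) (t := ρ / 60)
    (c := 1) (by linarith) one_pos (by fun_prop) (fun z _ w _ => by simp) isOpen_univ
    (subset_univ _)
  obtain ⟨δ, hδ, hδf⟩ := Metric.continuousAt_iff.1 (hf x hxr).continuousAt e he
  have k1 : (0 : ℝ) < 1 / 20 := by norm_num
  have k2 : 0 < δ ^ 2 / 40 := by positivity
  filter_upwards [eventually_params hρ0 k1, eventually_params hρ0 k2] with η p1 p2
  obtain ⟨hη, -, hβ, hβ1⟩ := p1
  have hηβ : η ^ 2 = 8 * η ^ 2 / ρ ^ 2 * ρ ^ 2 / 8 := by field_simp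
  have hβδ := p2.2.2.2
  set β := 8 * η ^ 2 / ρ ^ 2 with hβdef
  have hηc : (η : ℂ) ≠ 0 := by exact_mod_cast hη.ne'
  have hρc : (ρ : ℂ) ≠ 0 := Complex.ofReal_ne_zero.2 (ne_of_gt hρ0)
  -- inverse of the spike: `ζ` is the coordinate of the target along `n`, `u` solves `ζ = η / √u`
  set ζ : E → ℂ := fun v => ((ρ / 6 : ℝ) : ℂ) + ⟪n, v⟫_ℂ with hζ
  set u : E → ℂ := fun v => (η : ℂ) ^ 2 / ζ v ^ 2 with hu
  set h : E → E := fun v => (1 + β - u v) • x + (2 * u v / η) • M.symm (perp n v) with hh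
  have hk : ∀ v ∈ ball (0 : E) (ρ / 60), ‖6 / ρ * ζ v - 1‖ ≤ 1 / 10 := by
    intro v hv
    rw [mem_ball_zero_iff] at hv
    have h1 : 6 / (ρ : ℂ) * ζ v - 1 = ((6 / ρ : ℝ) : ℂ) * ⟪n, v⟫_ℂ := by
      rw [hζ]; push_cast; field_simp; ring
    rw [h1, norm_mul, Complex.norm_real, Real.norm_of_nonneg (by positivity)]
    have h2 := (norm_inner_le hMx v).trans hv.le
    calc 6 / ρ * ‖⟪n, v⟫_ℂ‖ ≤ 6 / ρ * (ρ / 60) := by gcongr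
      _ = 1 / 10 := by field_simp; norm_num
  have hζre : ∀ v ∈ ball (0 : E) (ρ / 60), 0 < (ζ v).re := by
    intro v hv
    have h1 := (inv_sq_bounds (hk v hv)).1
    have h2 : 6 / (ρ : ℂ) * ζ v = ((6 / ρ : ℝ) : ℂ) * ζ v := by push_cast; ring
    rw [h2, Complex.re_ofReal_mul] at h1
    exact (pos_iff_pos_of_mul_pos h1).1 (by positivity)
  have hζ0 : ∀ v ∈ ball (0 : E) (ρ / 60), ζ v ≠ 0 := fun v hv h0 => by
    have := hζre v hv
    simp [h0] at this
  have hueq : ∀ v, u v = ((9 / 2 * β : ℝ) : ℂ) * ((6 / ρ * ζ v) ^ 2)⁻¹ := by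
    intro v
    have h1 : (η : ℂ) ^ 2 = ((β * ρ ^ 2 / 8 : ℝ) : ℂ) := by rw [← hηβ]; push_cast; ring
    rw [hu]
    simp only [h1]
    push_cast
    rw [mul_pow, mul_inv, div_pow, inv_div, div_eq_mul_inv]
    ring
  have hure : ∀ v ∈ ball (0 : E) (ρ / 60), 9 / 4 * β ≤ (u v).re := by
    intro v hv
    have h1 := (inv_sq_bounds (hk v hv)).2.1
    rw [hueq, Complex.re_ofReal_mul]
    nlinarith
  have hun : ∀ v ∈ ball (0 : E) (ρ / 60), ‖u v‖ ≤ 45 / 8 * β := by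
    intro v hv
    have h1 := (inv_sq_bounds (hk v hv)).2.2
    rw [hueq, norm_mul, Complex.norm_real, Real.norm_of_nonneg (by positivity)]
    nlinarith
  have hxperp : ∀ v, ⟪x, M.symm (perp n v)⟫_ℂ = 0 := by
    intro v
    rw [← M.inner_map_map, M.apply_symm_apply]
    exact inner_perp hMx v
  have hxh : ∀ v, ⟪x, h v⟫_ℂ = 1 + β - u v := by
    intro v
    simp only [hh]
    rw [inner_add_right, inner_smul_right, inner_smul_right, hxperp, inner_self_one hx]
    ring
  have huc : ∀ v, ucoord x β (h v) = u v := fun v => by rw [ucoord, hxh]; ring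
  have hph : ∀ v, perp x (h v) = (2 * u v / η) • M.symm (perp n v) := fun v => by
    rw [perp, hxh]; simp only [hh]; abel
  have hsp : ∀ v ∈ ball (0 : E) (ρ / 60),
      f (h v) + (η : ℂ) • spike M x β (h v) = q + v + (f (h v) - f x) := by
    intro v hv
    have hur : 0 < (u v).re := lt_of_lt_of_le (by positivity) (hure v hv)
    have hu0 : u v ≠ 0 := fun h0 => by simp [h0] at hur
    have hsq : csqrt (u v) = η / ζ v := by
      refine csqrt_eq hur ?_ (by simp only [hu]; rw [div_pow])
      rw [div_eq_mul_inv, Complex.re_ofReal_mul, Complex.inv_re]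
      have h1 := hζre v hv
      have h2 : 0 < Complex.normSq (ζ v) := Complex.normSq_pos.2 (hζ0 v hv)
      positivity
    have h3 : (η : ℂ) • spike M x β (h v) = ((ρ / 6 : ℝ) : ℂ) • n + v := by
      rw [spike, huc, hph, hsq, ← hn, map_smul, M.apply_symm_apply, smul_add, smul_smul, smul_smul,
        smul_smul]
      have e1 : (η : ℂ) * (η / ζ v)⁻¹ = ζ v := by
        have := hζ0 v hv
        field_simp
      have e2 : (η : ℂ) * ((2 * u v)⁻¹ * (2 * u v / η)) = 1 := by field_simp
      rw [e1, mul_assoc (η : ℂ), e2, one_smul, perp, hζ]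
      module
    rw [h3, hq]
    abel
  have hperpn : ∀ v ∈ ball (0 : E) (ρ / 60), ‖perp x (h v)‖ ^ 2 ≤ 3 / 10 * β := by
    intro v hv
    have h1 : ‖perp n v‖ ≤ ρ / 60 := (norm_perp_le hMx v).trans (mem_ball_zero_iff.1 hv).le
    have h2 := hun v hv
    rw [hph, norm_smul, M.symm.norm_map, norm_div, norm_mul, Complex.norm_two, Complex.norm_real,
      Real.norm_of_nonneg hη.le, mul_pow, div_pow, hηβ]
    calc (2 * ‖u v‖) ^ 2 / (β * ρ ^ 2 / 8) * ‖perp n v‖ ^ 2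
        ≤ (2 * (45 / 8 * β)) ^ 2 / (β * ρ ^ 2 / 8) * (ρ / 60) ^ 2 := by gcongr
      _ = 9 / 32 * β := by field_simp; norm_num
      _ ≤ _ := by nlinarith
  have hh1 : ∀ v ∈ ball (0 : E) (ρ / 60), ‖h v‖ < 1 := by
    intro v hv
    have h1 := norm_sq_perp hx (h v)
    have h2 := hperpn v hv
    have h3 : ‖⟪x, h v⟫_ℂ‖ ^ 2 = (1 + β) ^ 2 - 2 * (1 + β) * (u v).re + ‖u v‖ ^ 2 := by
      rw [hxh, ← Complex.normSq_eq_norm_sq, ← Complex.normSq_eq_norm_sq, Complex.normSq_apply,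
        Complex.normSq_apply]
      simp only [Complex.sub_re, Complex.add_re, Complex.one_re, Complex.ofReal_re, Complex.sub_im,
        Complex.add_im, Complex.one_im, Complex.ofReal_im]
      ring
    have h4 : ‖u v‖ ^ 2 ≤ (45 / 8 * β) ^ 2 := by gcongr; exact hun v hv
    have h5 := hure v hv
    have h6 : ‖h v‖ ^ 2 < 1 := by nlinarith
    nlinarith [norm_nonneg (h v)]
  have hhx : ∀ v ∈ ball (0 : E) (ρ / 60), ‖f (h v) - f x‖ ≤ e := by
    intro v hv
    have h1 : ‖h v - x‖ ^ 2 ≤ 2 * 0 + 2 * (5 * β) := by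
      refine norm_sub_sq_le hx le_rfl zero_le_one (by linarith [hh1 v hv]) ?_
      rw [hxh, Complex.sub_re, Complex.add_re, Complex.one_re, Complex.ofReal_re]
      have := (Complex.re_le_norm _).trans (hun v hv)
      linarith
    have h2 : ‖h v - x‖ < δ :=
      (abs_lt_of_sq_lt_sq' (by nlinarith [mul_pos hδ hδ]) hδ.le).2
    rw [← dist_eq_norm] at h2 ⊢
    exact (hδf h2).le
  have hdiff : DifferentiableOn ℂ (fun v => q + v + (f (h v) - f x)) (ball 0 (ρ / 60)) := by
    intro v hv
    have d1 : DifferentiableAt ℂ ζ v :=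
      ((innerSL ℂ n).differentiableAt).const_add _
    have d1' : DifferentiableAt ℂ (fun v => ζ v ^ 2) v := d1.fun_pow 2
    have d2 : DifferentiableAt ℂ u v := by
      have := (d1'.fun_inv (pow_ne_zero 2 (hζ0 v hv))).const_mul ((η : ℂ) ^ 2)
      simpa only [hu, div_eq_mul_inv] using this
    have d3 : DifferentiableAt ℂ (fun v => M.symm (perp n v)) v := by
      have d4 : DifferentiableAt ℂ (perp n) v :=
        differentiableAt_id.sub (((innerSL ℂ n).differentiableAt).smul_const n)
      exact ((M.symm : E ≃L[ℂ] E) : E →L[ℂ] E).differentiableAt.comp v d4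
    have d5 : DifferentiableAt ℂ h v := by
      have := ((d2.const_sub (1 + β)).smul_const x).fun_add
        (((d2.const_mul 2).mul_const ((η : ℂ)⁻¹)).fun_smul d3)
      simpa only [hh, div_eq_mul_inv] using this
    have d6 : DifferentiableAt ℂ (fun v => f (h v)) v :=
      ((hf (h v) (mem_ball_zero_iff.2 ((hh1 v hv).trans hr))).differentiableAt).comp v d5
    exact ((differentiableAt_id.const_add q).add (d6.sub_const _)).differentiableWithinAt
  obtain ⟨-, -, hcov⟩ := hstab _ hdiff (fun v hv => by
    rw [add_sub_cancel_left]; exact hhx v hv)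
  intro p hp
  have hp' : p ∈ (fun v => q + v) '' closedBall (0 : E) (ρ / 120) :=
    ⟨p - q, by rwa [mem_closedBall_zero_iff, ← dist_eq_norm], by simp⟩
  obtain ⟨v, hv, rfl⟩ := hcov hp'
  exact ⟨h v, mem_closedBall_zero_iff.2 (hh1 v hv).le, hsp v hv⟩

/-- Extension of the image of the unit ball towards a point `y` at distance `ρ`: the map is
perturbed slightly away from the boundary so that the image stays near the old image and
the ball of radius `ρ` at `y`, and swallows a definite proportion of that ball. -/
theorem core_unit {f : E → E} {ρ ε : ℝ} {y : E} (hf : Good f 1)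
    (hρ : infDist y (f '' closedBall 0 1) = ρ) (hρ0 : 0 < ρ) (hε : 0 < ε) :
    ∃ g, Good g 1 ∧ (∀ z, ‖z‖ ≤ 1 - ε → ‖g z - f z‖ ≤ ε) ∧
      (∀ z, ‖z‖ ≤ 1 → ∃ q ∈ f '' closedBall 0 1 ∪ closedBall y ρ, ‖g z - q‖ ≤ ε) ∧
      ∃ q, closedBall q (ρ / 120) ⊆ ball y ρ ∧ closedBall q (ρ / 120) ⊆ g '' closedBall 0 1 := by
  obtain ⟨r, hr, hfa, c, hc, hanti⟩ := hf
  obtain ⟨x, n, a, hx, hn, ha, hy, hD⟩ :=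
    exists_nearest hr hc hfa.differentiableOn hanti hρ hρ0
  have hxr : x ∈ ball (0 : E) r := by rw [mem_ball_zero_iff, hx]; exact hr
  have hinj := fderiv_injective_of_antilip isOpen_ball hc hanti hxr
    (hfa x hxr).differentiableAt.hasFDerivAt
  obtain ⟨M, rfl, c₁, hc₁, hM⟩ := exists_unitary hinj hx hn hD
  obtain ⟨η, ⟨h1, h2, h3⟩, h4⟩ := ((core_perturb hr hc hfa hanti hρ hρ0 hx ha hc₁ hy hD hM hε).and
    (core_fill (M := M) hr hfa hρ0 hx)).exists
  refine ⟨_, h1, fun z hz => ?_, h3, _, ?_, h4⟩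
  · rw [add_sub_cancel_left]; exact h2 z hz
  · apply closedBall_subset_ball'
    rw [dist_eq_norm, hy]
    have : f x + ((ρ / 6 : ℝ) : ℂ) • M x - (f x + (ρ : ℂ) • M x) =
        ((ρ / 6 - ρ : ℝ) : ℂ) • M x := by push_cast; module
    rw [this, norm_smul, hn, Complex.norm_real, Real.norm_eq_abs, abs_of_nonpos (by linarith)]
    linarith

theorem good_scale {f : E → E} {r s : ℝ} (hs : 0 < s) (hf : Good f (s * r)) :
    Good (fun z => f ((s : ℂ) • z)) r := by
  obtain ⟨r', hr', hfa, c, hc, hanti⟩ := hf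
  have hmem : ∀ z ∈ ball (0 : E) (r' / s), (s : ℂ) • z ∈ ball (0 : E) r' := by
    intro z hz
    rw [mem_ball_zero_iff] at hz ⊢
    rw [norm_smul, Complex.norm_real, Real.norm_of_nonneg hs.le]
    rw [lt_div_iff₀ hs] at hz
    linarith
  refine ⟨r' / s, by rw [gt_iff_lt, lt_div_iff₀ hs]; linarith, fun z hz => ?_, c * s,
    by positivity, fun z hz w hw => ?_⟩
  · have h1 : AnalyticAt ℂ (fun z : E => (s : ℂ) • z) z := analyticAt_const.smul analyticAt_id
    exact (hfa _ (hmem z hz)).comp h1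
  · have := hanti _ (hmem z hz) _ (hmem w hw)
    rw [← smul_sub, norm_smul, Complex.norm_real, Real.norm_of_nonneg hs.le] at this
    linarith

theorem image_scale (f : E → E) {s : ℝ} (hs : 0 < s) (r : ℝ) :
    (fun z => f ((s : ℂ) • z)) '' closedBall 0 r = f '' closedBall 0 (s * r) := by
  have hsc : (s : ℂ) ≠ 0 := by exact_mod_cast hs.ne'
  ext p
  constructor
  · rintro ⟨z, hz, rfl⟩
    refine ⟨(s : ℂ) • z, ?_, rfl⟩
    rw [mem_closedBall_zero_iff] at hz ⊢
    rw [norm_smul, Complex.norm_real, Real.norm_of_nonneg hs.le]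
    gcongr
  · rintro ⟨z, hz, rfl⟩
    refine ⟨(s : ℂ)⁻¹ • z, ?_, by simp only [smul_inv_smul₀ hsc]⟩
    rw [mem_closedBall_zero_iff] at hz ⊢
    rw [norm_smul, norm_inv, Complex.norm_real, Real.norm_of_nonneg hs.le, inv_mul_le_iff₀ hs]
    exact hz

/-- `core_unit` for a ball of arbitrary radius. -/
theorem core_radius {f : E → E} {r ρ ε : ℝ} {y : E} (hr : 0 < r) (hf : Good f r)
    (hρ : infDist y (f '' closedBall 0 r) = ρ) (hρ0 : 0 < ρ) (hε : 0 < ε) :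
    ∃ g, Good g r ∧ (∀ z, ‖z‖ ≤ r * (1 - ε) → ‖g z - f z‖ ≤ ε) ∧
      (∀ z, ‖z‖ ≤ r → ∃ q ∈ f '' closedBall 0 r ∪ closedBall y ρ, ‖g z - q‖ ≤ ε) ∧
      ∃ q, closedBall q (ρ / 120) ⊆ ball y ρ ∧ closedBall q (ρ / 120) ⊆ g '' closedBall 0 r := by
  have hrc : (r : ℂ) ≠ 0 := by exact_mod_cast hr.ne'
  have him := image_scale f hr 1
  rw [mul_one] at him
  obtain ⟨g, h1, h2, h3, q, h4, h5⟩ := core_unit (f := fun z => f ((r : ℂ) • z)) (y := y) (ρ := ρ)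
    (good_scale hr (by rwa [mul_one])) (by rwa [him]) hρ0 hε
  have hri : 0 < r⁻¹ := inv_pos.2 hr
  have hsm : ∀ z : E, ‖((r⁻¹ : ℝ) : ℂ) • z‖ = r⁻¹ * ‖z‖ := fun z => by
    rw [norm_smul, Complex.norm_real, Real.norm_of_nonneg hri.le]
  have hback : ∀ z : E, (r : ℂ) • ((r⁻¹ : ℝ) : ℂ) • z = z := fun z => by
    push_cast; exact smul_inv_smul₀ hrc z
  refine ⟨fun z => g (((r⁻¹ : ℝ) : ℂ) • z), good_scale hri ?_, fun z hz => ?_, fun z hz => ?_,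
    q, h4, ?_⟩
  · rwa [inv_mul_cancel₀ hr.ne']
  · have := h2 (((r⁻¹ : ℝ) : ℂ) • z) (by rw [hsm, inv_mul_le_iff₀ hr]; exact hz)
    rwa [hback] at this
  · have := h3 (((r⁻¹ : ℝ) : ℂ) • z) (by rw [hsm, inv_mul_le_iff₀ hr, mul_one]; exact hz)
    rwa [him] at this
  · rw [image_scale g hri, inv_mul_cancel₀ hr.ne']
    exact h5

theorem Good.differentiableOn {f : E → E} {r : ℝ} (hf : Good f r) :
    DifferentiableOn ℂ f (closedBall 0 r) := by
  obtain ⟨r', hr', hfa, -⟩ := hf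
  exact hfa.differentiableOn.mono (closedBall_subset_ball hr')

theorem Good.isCompact_image {f : E → E} {r : ℝ} (hf : Good f r) :
    IsCompact (f '' closedBall 0 r) := by
  have : ProperSpace E := FiniteDimensional.proper ℂ E
  exact (isCompact_closedBall _ _).image_of_continuousOn hf.differentiableOn.continuousOn

theorem Good.exists_radius {f : E → E} {t : ℝ} (ht : 0 < t) (hf : Good f t) {O : Set E}
    (hO : IsOpen O) (hsub : f '' closedBall 0 t ⊆ O) :
    ∃ t₀ > t, ∀ t', t' < t₀ → Good f t' ∧ f '' closedBall 0 t' ⊆ O := by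
  have : ProperSpace E := FiniteDimensional.proper ℂ E
  obtain ⟨r, hr, hfa, hanti⟩ := hf
  have hopen : IsOpen (ball 0 r ∩ f ⁻¹' O) := hfa.continuousOn.isOpen_inter_preimage isOpen_ball hO
  obtain ⟨d, hd, hdsub⟩ := (isCompact_closedBall (0 : E) t).exists_thickening_subset_open hopen
    (fun z hz => ⟨closedBall_subset_ball hr hz, hsub (mem_image_of_mem f hz)⟩)
  rw [thickening_closedBall hd ht.le] at hdsub
  refine ⟨min r (d + t), lt_min hr (by linarith), fun t' ht' => ⟨⟨r, ?_, hfa, hanti⟩, ?_⟩⟩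
  · exact ht'.trans_le (min_le_left _ _)
  · rintro _ ⟨z, hz, rfl⟩
    exact (hdsub (closedBall_subset_ball (ht'.trans_le (min_le_right _ _)) hz)).2

/-- One extension step. The radius of the domain grows slightly, which makes room for the old
image to be covered entirely by the new one. -/
theorem core_step {f : E → E} {t ρ ε : ℝ} {y : E} (ht : 0 < t) (ht1 : t < 1) (hf : Good f t)
    (hρ : infDist y (f '' closedBall 0 t) = ρ) (hρ0 : 0 < ρ) (hε : 0 < ε) :
    ∃ r g, t < r ∧ r < 1 ∧ Good g r ∧ (∀ z ∈ ball (0 : E) t, ‖g z - f z‖ ≤ ε) ∧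
      f '' closedBall 0 t ⊆ g '' closedBall 0 r ∧
      (∀ z, ‖z‖ ≤ r → ∃ q ∈ f '' closedBall 0 t ∪ closedBall y ρ, ‖g z - q‖ ≤ ε) ∧
      ∃ q, closedBall q (ρ / 240) ⊆ g '' closedBall 0 r ∧
        Disjoint (closedBall q (ρ / 240)) (f '' closedBall 0 t) := by
  set T := f '' closedBall 0 t with hT
  have hTne : T.Nonempty := ⟨f 0, mem_image_of_mem f (mem_closedBall_self ht.le)⟩
  set δ := min (ε / 2) (ρ / 2) with hδ
  have hδ0 : 0 < δ := by positivity
  obtain ⟨t₀, ht₀, hrad⟩ := hf.exists_radius ht (isOpen_thickening (δ := δ) (E := T))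
    (self_subset_thickening hδ0 T)
  obtain ⟨r, htr, hr⟩ := exists_between (lt_min ht₀ ht1)
  have hr1 : r < 1 := hr.trans_le (min_le_right _ _)
  obtain ⟨hgood, hthick⟩ := hrad r (hr.trans_le (min_le_left _ _))
  have hr0 : 0 < r := ht.trans htr
  set ρ' := infDist y (f '' closedBall 0 r) with hρ'
  have hTT' : T ⊆ f '' closedBall 0 r := image_mono (closedBall_subset_closedBall htr.le)
  have hρ'le : ρ' ≤ ρ := hρ ▸ infDist_le_infDist_of_subset hTT' hTne
  have hρ'ge : ρ / 2 ≤ ρ' := by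
    rw [hρ', le_infDist (hTne.mono hTT')]
    intro p hp
    obtain ⟨p', hp', hpp⟩ := mem_thickening_iff.1 (hthick hp)
    have h1 : ρ ≤ dist y p' := hρ ▸ infDist_le_dist_of_mem hp'
    have h2 := dist_triangle y p p'
    have h3 : δ ≤ ρ / 2 := min_le_right _ _
    linarith
  have hρ'0 : 0 < ρ' := by linarith
  obtain ⟨r₂, hr₂, hfa, c, hc, hanti⟩ := hgood
  set m := (t + r) / 2 with hm
  have hmsub : ball (0 : E) m ⊆ ball 0 r₂ := ball_subset_ball (by linarith)
  obtain ⟨e, he, hstab⟩ := stability (f := f) (r := t) (t := m) (c := c) (by linarith) hc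
    (hfa.differentiableOn.mono hmsub) (fun z hz w hw => hanti z (hmsub hz) w (hmsub hw))
    isOpen_univ (subset_univ _)
  set ε' := min (ε / 2) (min e ((r - t) / 2)) with hε'
  have hrt0 : 0 < r - t := by linarith
  have hε'0 : 0 < ε' := by positivity
  have hε'1 : ε' ≤ ε / 2 := min_le_left _ _
  have hε'2 : ε' ≤ e := (min_le_right _ _).trans (min_le_left _ _)
  have hε'3 : ε' ≤ (r - t) / 2 := (min_le_right _ _).trans (min_le_right _ _)
  obtain ⟨g, hg, hgf, hgim, q, hq1, hq2⟩ := core_radius (y := y) hr0 ⟨r₂, hr₂, hfa, c, hc, hanti⟩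
    rfl hρ'0 hε'0
  have hmr : m ≤ r * (1 - ε') := by nlinarith
  have hcl : ∀ z ∈ ball (0 : E) m, ‖g z - f z‖ ≤ ε' := fun z hz =>
    hgf z ((mem_ball_zero_iff.1 hz).le.trans hmr)
  have hballsub : closedBall q (ρ / 240) ⊆ closedBall q (ρ' / 120) :=
    closedBall_subset_closedBall (by linarith)
  refine ⟨r, g, htr, hr1, hg, fun z hz => ?_, ?_, fun z hz => ?_, q, hballsub.trans hq2, ?_⟩
  · exact (hcl z (ball_subset_ball (by linarith) hz)).trans (by linarith)
  · have hd : DifferentiableOn ℂ g (ball 0 m) := hg.differentiableOn.mono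
      (ball_subset_closedBall.trans (closedBall_subset_closedBall (by linarith)))
    refine ((hstab g hd fun z hz => (hcl z hz).trans hε'2).2.2).trans (image_mono ?_)
    exact ball_subset_closedBall.trans (closedBall_subset_closedBall (by linarith))
  · obtain ⟨p, hp | hp, hpz⟩ := hgim z hz
    · obtain ⟨p', hp', hpp⟩ := mem_thickening_iff.1 (hthick hp)
      refine ⟨p', Or.inl hp', ?_⟩
      rw [← dist_eq_norm] at hpz ⊢
      have h3 : δ ≤ ε / 2 := min_le_left _ _
      linarith [dist_triangle (g z) p p']
    · exact ⟨p, Or.inr (closedBall_subset_closedBall hρ'le hp), by linarith⟩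
  · rw [Set.disjoint_left]
    intro p hp hpT
    have h1 := mem_ball.1 (hq1 (hballsub hp))
    have h2 : ρ ≤ dist y p := hρ ▸ infDist_le_dist_of_mem hpT
    rw [dist_comm] at h1
    linarith

end Core2

/-! ### Exhaustion in measure -/

section Exhaustion

variable {E : Type*} [NormedAddCommGroup E] [NormedSpace ℝ E] [FiniteDimensional ℝ E]
  [MeasurableSpace E] [BorelSpace E]

/-- The measure-theoretic half of the construction. An increasing sequence of compact subsets
`T k` of a bounded connected open set `U`, where `T (k + 1)` contains a ball of radius comparable
to the (almost maximal) radius `ρ k` of a ball in `U` touching `T k`, while differing from `T k`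
only within distance `e k` of `T k` and within `2 * ρ k` of the centre `y k`, exhausts `U` up to a
null set. The series of the measures of the balls `closedBall (y k) (4 * ρ k)` converges because
`U` has finite measure, so Borel–Cantelli applies. -/
theorem measure_diff_iUnion_eq_zero (μ : Measure E) [μ.IsAddHaarMeasure] {U : Set E}
    (hUo : IsOpen U) (hUc : IsConnected U) (hUb : Bornology.IsBounded U)
    {T : ℕ → Set E} {e ρ : ℕ → ℝ} {y q : ℕ → E}
    (hTne : ∀ k, (T k).Nonempty) (hTc : ∀ k, IsCompact (T k)) (hTm : ∀ k, T k ⊆ T (k + 1))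
    (hTU : ∀ k, T k ⊆ U) (he : ∀ k, e (k + 1) ≤ e k / 2)
    (hshell : ∀ k, μ (cthickening (2 * e k) (T k) \ T k) ≤ 2⁻¹ ^ k)
    (hρ0 : ∀ k, 0 < ρ k)
    (hmax : ∀ k x, x ∉ T k → closedBall x (infDist x (T k)) ⊆ U → infDist x (T k) ≤ 2 * ρ k)
    (hnext : ∀ k, ∀ p ∈ T (k + 1), ∃ p' ∈ T k ∪ closedBall (y k) (ρ k),
      dist p p' ≤ e k ∧ dist p p' ≤ ρ k)
    (hq : ∀ k, closedBall (q k) (ρ k / 240) ⊆ T (k + 1))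
    (hqd : ∀ k, Disjoint (closedBall (q k) (ρ k / 240)) (T k)) :
    μ (U \ ⋃ k, T k) = 0 := by
  have hmono : Monotone T := monotone_nat_of_le_succ hTm
  have hUfin : μ U < ∞ := hUb.measure_lt_top
  -- The balls `closedBall (q k) (ρ k / 240)` are disjoint subsets of `U`.
  have hsum : ∑' k, μ (closedBall (q k) (ρ k / 240)) ≠ ∞ := by
    rw [← measure_iUnion _ fun k => measurableSet_closedBall]
    · refine ((measure_mono (iUnion_subset fun k => ?_)).trans_lt hUfin).ne
      exact (hq k).trans (hTU _)
    · have key : ∀ i j, i < j →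
          Disjoint (closedBall (q i) (ρ i / 240)) (closedBall (q j) (ρ j / 240)) :=
        fun i j hij => ((hqd j).mono_right ((hq i).trans (hmono hij))).symm
      intro i j hij
      rcases lt_or_gt_of_ne hij with h | h
      · exact key i j h
      · exact (key j i h).symm
  have hρsmall : ∀ δ > 0, ∀ᶠ k in atTop, ρ k < δ := by
    intro δ hδ
    have h1 := ENNReal.tendsto_atTop_zero_of_tsum_ne_top hsum
    have h2 : 0 < μ (closedBall (0 : E) (δ / 240)) := measure_closedBall_pos μ _ (by positivity)
    filter_upwards [h1.eventually_lt_const h2] with k hk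
    by_contra! hcon
    refine hk.not_ge ?_
    rw [Measure.addHaar_closedBall_center μ (q k)]
    exact measure_mono (closedBall_subset_closedBall (by linarith))
  have hsum4 : ∑' k, μ (closedBall (y k) (4 * ρ k)) ≠ ∞ := by
    have h1 : ∀ k, μ (closedBall (y k) (4 * ρ k)) =
        ENNReal.ofReal (960 ^ Module.finrank ℝ E) * μ (closedBall (q k) (ρ k / 240)) := by
      intro k
      have := (hρ0 k).le
      rw [Measure.addHaar_closedBall μ _ (by positivity),
        Measure.addHaar_closedBall μ _ (by positivity), ← mul_assoc,
        ← ENNReal.ofReal_mul (by positivity), ← mul_pow]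
      congr 3
      ring
    simp_rw [h1]
    rw [ENNReal.tsum_mul_left]
    exact ENNReal.mul_ne_top ENNReal.ofReal_ne_top hsum
  -- Connectedness of `U` makes the union of the `T k` dense in `U`.
  have hdense : U ⊆ interior (closure (⋃ k, T k)) := by
    refine hUc.isPreconnected.subset_of_closure_inter_subset isOpen_interior ?_ ?_
    · refine ⟨q 0, hTU 1 (hq 0 (mem_closedBall_self (by linarith [hρ0 0]))), ?_⟩
      rw [mem_interior]
      refine ⟨ball (q 0) (ρ 0 / 240), ?_, isOpen_ball, mem_ball_self (by linarith [hρ0 0])⟩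
      exact (ball_subset_closedBall.trans ((hq 0).trans (subset_iUnion T 1))).trans subset_closure
    · rintro x ⟨hx, hxU⟩
      have hxC : x ∈ closure (⋃ k, T k) := closure_minimal interior_subset isClosed_closure hx
      obtain ⟨b, hb, hbU⟩ := Metric.isOpen_iff.1 hUo x hxU
      rw [mem_interior]
      refine ⟨ball x (b / 4), ?_, isOpen_ball, mem_ball_self (by positivity)⟩
      intro x' hx'
      obtain ⟨p, hp, hxp⟩ := Metric.mem_closure_iff.1 hxC (b / 4) (by positivity)
      obtain ⟨n, hn⟩ := mem_iUnion.1 hp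
      rw [mem_ball] at hx'
      have hle : ∀ k ≥ n, infDist x' (T k) ≤ 2 * ρ k := by
        intro k hk
        by_cases hxT : x' ∈ T k
        · rw [infDist_zero_of_mem hxT]; linarith [hρ0 k]
        · refine hmax k x' hxT fun z hz => hbU ?_
          have h1 : infDist x' (T k) ≤ dist x' p := infDist_le_dist_of_mem (hmono hk hn)
          have h2 := dist_triangle x' x p
          rw [mem_closedBall] at hz
          rw [mem_ball]
          have h3 := dist_triangle z x' x
          linarith
      rw [Metric.mem_closure_iff]
      intro δ hδ
      obtain ⟨k, hk1, hk2⟩ := ((hρsmall (δ / 2) (by positivity)).and (eventually_ge_atTop n)).exists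
      obtain ⟨p', hp', hd⟩ := (infDist_lt_iff (hTne k)).1
        (lt_of_le_of_lt (hle k hk2) (by linarith : 2 * ρ k < δ))
      exact ⟨p', mem_iUnion.2 ⟨k, hp'⟩, hd⟩
  have hD : ∀ x ∈ U, ∀ δ > 0, ∀ᶠ k in atTop, infDist x (T k) < δ := by
    intro x hx δ hδ
    obtain ⟨p, hp, hxp⟩ := Metric.mem_closure_iff.1 (interior_subset (hdense hx)) δ hδ
    obtain ⟨n, hn⟩ := mem_iUnion.1 hp
    filter_upwards [eventually_ge_atTop n] with k hk
    exact (infDist_le_dist_of_mem (hmono hk hn)).trans_lt hxp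
  -- A point of `U` outside all `T k` lies in infinitely many of the small sets of the
  -- Borel–Cantelli argument: otherwise `infDist x (T k) - 2 * e k` would eventually be positive
  -- and nondecreasing.
  have hfreq : U \ ⋃ k, T k ⊆ {x | ∃ᶠ k in atTop,
      x ∈ (cthickening (2 * e k) (T k) \ T k) ∪ closedBall (y k) (4 * ρ k)} := by
    rintro x ⟨hxU, hxT⟩
    have hxT : ∀ k, x ∉ T k := fun k hk => hxT (mem_iUnion.2 ⟨k, hk⟩)
    change ∃ᶠ k in atTop, _
    by_contra hcon
    rw [not_frequently] at hcon
    obtain ⟨b, hb, hbU⟩ := Metric.isOpen_iff.1 hUo x hxU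
    obtain ⟨n₀, hn₀⟩ := eventually_atTop.1 hcon
    obtain ⟨n, hn1, hn2⟩ := ((hD x hxU b hb).and (eventually_ge_atTop n₀)).exists
    have hanti : ∀ k ≥ n, infDist x (T k) ≤ infDist x (T n) := fun k hk =>
      infDist_le_infDist_of_subset (hmono hk) (hTne n)
    have hstep : ∀ k ≥ n, infDist x (T k) - e k ≤ infDist x (T (k + 1)) := by
      intro k hk
      have h1 : infDist x (T k) ≤ 2 * ρ k := by
        refine hmax k x (hxT k) fun z hz => hbU ?_
        rw [mem_closedBall] at hz
        exact mem_ball.2 (hz.trans_lt ((hanti k hk).trans_lt hn1))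
      have h2 : 4 * ρ k < dist x (y k) := by
        have := fun h => hn₀ k (hn2.trans hk) (Or.inr h)
        rw [mem_closedBall] at this
        exact not_le.1 this
      refine (le_infDist (hTne _)).2 fun p hp => ?_
      obtain ⟨p', hp', h3, h4⟩ := hnext k p hp
      have h5 := dist_triangle x p p'
      rcases hp' with hp' | hp'
      · have := infDist_le_dist_of_mem (x := x) hp'
        linarith
      · rw [mem_closedBall] at hp'
        have h6 := dist_triangle x p' (y k)
        have h7 : 0 ≤ e k := dist_nonneg.trans h3
        linarith
    have hpos : 0 < infDist x (T n) - 2 * e n := by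
      have h1 := fun h => hn₀ n hn2 (Or.inl ⟨h, hxT n⟩)
      by_contra! h2
      refine h1 ?_
      obtain ⟨p, hp, hd⟩ := (hTc n).exists_infDist_eq_dist (hTne n) x
      exact mem_cthickening_of_dist_le _ p _ _ hp (by linarith)
    have hinc : ∀ k ≥ n, infDist x (T n) - 2 * e n ≤ infDist x (T k) - 2 * e k := by
      intro k hk
      induction k, hk using Nat.le_induction with
      | base => rfl
      | succ k hk ih => linarith [hstep k hk, he k]
    obtain ⟨k, hk1, hk2⟩ := ((hD x hxU _ hpos).and (eventually_ge_atTop n)).exists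
    obtain ⟨p, hp⟩ := hTne (k + 1)
    obtain ⟨p', -, h3, -⟩ := hnext k p hp
    have h7 : 0 ≤ e k := dist_nonneg.trans h3
    linarith [hinc k hk2]
  refine measure_mono_null hfreq (measure_setOfPred_frequently_eq_zero ?_)
  have h1 : ∑' k, (2⁻¹ ^ k + μ (closedBall (y k) (4 * ρ k))) ≠ ∞ := by
    rw [ENNReal.tsum_add]
    refine ENNReal.add_ne_top.2 ⟨?_, hsum4⟩
    rw [ENNReal.tsum_geometric, ENNReal.one_sub_inv_two, inv_inv]
    exact ENNReal.ofNat_ne_top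
  refine ne_top_of_le_ne_top h1 (ENNReal.tsum_le_tsum fun k => ?_)
  exact (measure_union_le _ _).trans (add_le_add_left (hshell k) _)

end Exhaustion

/-! ### Iteration and passage to the limit -/

section Iteration

variable {E : Type*} [NormedAddCommGroup E] [InnerProductSpace ℂ E] [FiniteDimensional ℂ E]

/-- `StableOn f r t e U`: every holomorphic map on `ball 0 t` that is `e`-close to `f` is injective
on `closedBall 0 r`, maps it into `U`, and covers `f '' closedBall 0 r`. -/
def StableOn (f : E → E) (r t e : ℝ) (U : Set E) : Prop :=
  ∀ g : E → E, DifferentiableOn ℂ g (ball 0 t) → (∀ z ∈ ball (0 : E) t, ‖g z - f z‖ ≤ e) →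
    InjOn g (closedBall 0 r) ∧ g '' closedBall 0 r ⊆ U ∧ f '' closedBall 0 r ⊆ image g (ball 0 t)

/-- The pointwise limit `F` of the maps `f k` inherits injectivity, the target `U`, and the images
`f k '' closedBall 0 (r k)` from the stability of each stage; it lives on the ball of radius
`⨆ k, r k`, which is rescaled to the unit ball. -/
theorem exists_limit {U : Set E} {f : ℕ → E → E} {r t e : ℕ → ℝ}
    (hr0 : ∀ k, 0 < r k) (hrt : ∀ k, r k < t k) (htr : ∀ k, t k < r (k + 1)) (ht1 : ∀ k, t k < 1)
    (hd : ∀ k, DifferentiableOn ℂ (f k) (ball 0 (t k)))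
    (he0 : ∀ k, 0 < e k) (he : ∀ k, e (k + 1) ≤ e k / 2)
    (hclose : ∀ k, ∀ z ∈ ball (0 : E) (t k), ‖f (k + 1) z - f k z‖ ≤ e k / 2)
    (hstab : ∀ k, StableOn (f k) (r k) (t k) (e k) U) :
    ∃ G : E → E, DifferentiableOn ℂ G (ball 0 1) ∧ InjOn G (ball 0 1) ∧ G '' ball 0 1 ⊆ U ∧
      ∀ k, f k '' closedBall 0 (r k) ⊆ G '' ball 0 1 := by
  have htmono : Monotone t := monotone_nat_of_le_succ fun k => ((htr k).trans (hrt _)).le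
  have hrmono : Monotone r := monotone_nat_of_le_succ fun k => ((hrt k).trans (htr _)).le
  have hpow : ∀ k n, e (n + k) ≤ e k / 2 ^ n := by
    intro k n
    induction n with
    | zero => simp
    | succ n ih =>
      rw [add_right_comm, pow_succ, ← div_div]
      exact (he _).trans (by linarith)
  have hgeo : ∀ k, ∀ z ∈ ball (0 : E) (t k), ∀ n,
      dist (f (n + k) z) (f (n + 1 + k) z) ≤ e k / 2 / 2 ^ n := by
    intro k z hz n
    rw [dist_comm, dist_eq_norm, add_right_comm]
    refine (hclose (n + k) z (ball_subset_ball (htmono (Nat.le_add_left _ _)) hz)).trans ?_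
    rw [div_right_comm]
    linarith [hpow k n]
  have hlim : ∀ z, ∃ a, ∀ k, z ∈ ball (0 : E) (t k) → ‖f k z - a‖ ≤ e k := by
    intro z
    by_cases hz : ∃ k, z ∈ ball (0 : E) (t k)
    · obtain ⟨k₀, hk₀⟩ := hz
      obtain ⟨a, ha⟩ := cauchySeq_tendsto_of_complete
        (cauchySeq_of_le_geometric_two (f := fun n => f (n + k₀) z) (hgeo k₀ z hk₀))
      refine ⟨a, fun k hk => ?_⟩
      rw [tendsto_add_atTop_iff_nat (f := fun n => f n z) k₀] at ha
      have h := dist_le_of_le_geometric_two_of_tendsto₀ (f := fun n => f (n + k) z) (hgeo k z hk)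
        ((tendsto_add_atTop_iff_nat (f := fun n => f n z) k).2 ha)
      simpa [dist_eq_norm] using h
    · exact ⟨0, fun k hk => absurd ⟨k, hk⟩ hz⟩
  choose F hF using hlim
  have hetend : Tendsto e atTop (𝓝 0) := by
    refine squeeze_zero (fun k => (he0 k).le) (fun k => hpow 0 k) ?_
    have := (tendsto_pow_atTop_nhds_zero_of_lt_one (r := (1 / 2 : ℝ)) (by norm_num)
      (by norm_num)).const_mul (e 0)
    simpa [div_eq_mul_inv] using this
  have hFd : ∀ k, DifferentiableOn ℂ F (ball 0 (r k)) := by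
    intro k
    refine differentiableOn_of_uniform_limit (f := fun n => f (n + k)) (e := fun n => e (n + k))
      (hrt k) (fun n => ?_) ((tendsto_add_atTop_iff_nat k).2 hetend) fun n z hz => ?_
    · exact (hd _).mono (ball_subset_ball (htmono (Nat.le_add_left _ _)))
    · exact hF z _ (ball_subset_ball (htmono (Nat.le_add_left _ _)) hz)
  have hFs := fun k => hstab k F ((hFd (k + 1)).mono (ball_subset_ball (htr k).le))
    fun z hz => by rw [norm_sub_rev]; exact hF z k hz
  have hbdd : BddAbove (range r) :=
    ⟨1, by rintro _ ⟨k, rfl⟩; exact ((hrt k).trans (ht1 k)).le⟩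
  set R := ⨆ k, r k with hR
  have hrR : ∀ k, r k ≤ R := fun k => le_ciSup hbdd k
  have hR0 : 0 < R := (hr0 0).trans_le (hrR 0)
  have hmemR : ∀ z : E, ‖z‖ < R → ∃ k, ‖z‖ < r k := fun z hz => exists_lt_of_lt_ciSup hz
  have hscale : ∀ z : E, z ∈ ball (0 : E) 1 → ‖(R : ℂ) • z‖ < R := by
    intro z hz
    rw [norm_smul, Complex.norm_real, Real.norm_of_nonneg hR0.le]
    rw [mem_ball_zero_iff] at hz
    nlinarith
  refine ⟨fun z => F ((R : ℂ) • z), ?_, ?_, ?_, ?_⟩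
  · intro z hz
    obtain ⟨k, hk⟩ := hmemR _ (hscale z hz)
    have h1 : DifferentiableAt ℂ F ((R : ℂ) • z) :=
      (hFd k).differentiableAt (isOpen_ball.mem_nhds (mem_ball_zero_iff.2 hk))
    exact (h1.comp z (differentiableAt_id.const_smul (R : ℂ))).differentiableWithinAt
  · intro z hz w hw hzw
    obtain ⟨k, hk⟩ := hmemR _ (hscale z hz)
    obtain ⟨l, hl⟩ := hmemR _ (hscale w hw)
    have h := (hFs (max k l)).1
      (mem_closedBall_zero_iff.2 (hk.le.trans (hrmono (le_max_left _ _))))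
      (mem_closedBall_zero_iff.2 (hl.le.trans (hrmono (le_max_right _ _)))) hzw
    exact smul_right_injective E (Complex.ofReal_ne_zero.2 hR0.ne') h
  · rintro _ ⟨z, hz, rfl⟩
    obtain ⟨k, hk⟩ := hmemR _ (hscale z hz)
    exact (hFs k).2.1 (mem_image_of_mem F (mem_closedBall_zero_iff.2 hk.le))
  · intro k p hp
    obtain ⟨z, hz, rfl⟩ := (hFs k).2.2 hp
    have hR' : (R : ℂ) ≠ 0 := Complex.ofReal_ne_zero.2 hR0.ne'
    refine ⟨(R : ℂ)⁻¹ • z, ?_, by simp [smul_smul, hR']⟩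
    rw [mem_ball_zero_iff] at hz ⊢
    rw [norm_smul, norm_inv, Complex.norm_real, Real.norm_of_nonneg hR0.le, inv_mul_lt_one₀ hR0]
    exact hz.trans ((htr k).trans_le (hrR _))

variable [MeasurableSpace E] [BorelSpace E]

/-- The requirements on the map `f`, the radii `r < t` and the tolerance `e` at the `k`-th stage of
the construction. -/
structure Stage (U : Set E) (μ : Measure E) (k : ℕ) (f : E → E) (r t e : ℝ) : Prop where
  r_pos : 0 < r
  r_lt : r < t
  t_lt : t < 1
  e_pos : 0 < e
  good : Good f t
  sub : f '' closedBall 0 t ⊆ U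
  stable : StableOn f r t e U
  shell : μ (cthickening (2 * e) (f '' closedBall 0 t) \ f '' closedBall 0 t) ≤ 2⁻¹ ^ k

/-- A good map on `closedBall 0 r` becomes a stage after enlarging the radius slightly and taking
the tolerance small enough. -/
theorem exists_stage (μ : Measure E) [IsFiniteMeasureOnCompacts μ] {U O : Set E} (k : ℕ)
    {f : E → E} {r e₀ : ℝ} (hr0 : 0 < r) (hr1 : r < 1) (hf : Good f r) (hO : IsOpen O)
    (hOU : O ⊆ U) (hU : IsOpen U) (hfO : f '' closedBall 0 r ⊆ O) (he₀ : 0 < e₀) :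
    ∃ t e, e ≤ e₀ ∧ f '' closedBall 0 t ⊆ O ∧ Stage U μ k f r t e := by
  have : ProperSpace E := FiniteDimensional.proper ℂ E
  obtain ⟨t₀, ht₀, hrad⟩ := hf.exists_radius hr0 hO hfO
  obtain ⟨t, hrt, ht⟩ := exists_between (lt_min ht₀ hr1)
  obtain ⟨hgt, htO⟩ := hrad t (ht.trans_le (min_le_left _ _))
  have hcomp : IsCompact (f '' closedBall 0 t) := hgt.isCompact_image
  obtain ⟨r', hr', han, c, hc, hanti⟩ := hgt
  have hsub : ball (0 : E) t ⊆ ball 0 r' := ball_subset_ball hr'.le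
  obtain ⟨e₁, he₁, hst⟩ := stability hrt hc (han.differentiableOn.mono hsub)
    (fun z hz w hw => hanti z (hsub hz) w (hsub hw)) hU (hfO.trans hOU)
  have hmeas : ∀ᶠ δ in 𝓝 (0 : ℝ), μ (cthickening δ (f '' closedBall 0 t)) <
      μ (f '' closedBall 0 t) + 2⁻¹ ^ k := by
    refine (tendsto_measure_cthickening_of_isCompact hcomp).eventually_lt_const ?_
    exact ENNReal.lt_add_right hcomp.measure_lt_top.ne (by simp)
  obtain ⟨δ, hδ, hball⟩ := Metric.eventually_nhds_iff.1 hmeas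
  have hm : 0 < min e₀ (min e₁ (δ / 4)) := by positivity
  refine ⟨t, min e₀ (min e₁ (δ / 4)), min_le_left _ _, htO, hr0, hrt,
    ht.trans_le (min_le_right _ _), hm, ⟨r', hr', han, c, hc, hanti⟩, htO.trans hOU, ?_, ?_⟩
  · intro g hg hgf
    exact hst g hg fun z hz => (hgf z hz).trans ((min_le_right _ _).trans (min_le_left _ _))
  · have h4 : min e₀ (min e₁ (δ / 4)) ≤ δ / 4 := (min_le_right _ _).trans (min_le_right _ _)
    have h5 := @hball (2 * min e₀ (min e₁ (δ / 4))) (by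
      rw [dist_zero_right, Real.norm_of_nonneg (by positivity)]; linarith)
    rw [measure_sdiff (self_subset_cthickening _) hcomp.isClosed.nullMeasurableSet
      hcomp.measure_lt_top.ne]
    exact tsub_le_iff_left.2 h5.le

/-- How a stage `f, t, e` is related to the following one `f', r', t', e'`: the ball
`closedBall y ρ` in `U` touching `f '' closedBall 0 t` has almost the largest possible radius, and
the new image contains a ball of comparable radius disjoint from the old image. -/
structure Next (U : Set E) (f : E → E) (t e : ℝ) (f' : E → E) (r' t' e' : ℝ) : Prop where
  t_lt : t < r'
  e_le : e' ≤ e / 2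
  close : ∀ z ∈ ball (0 : E) t, ‖f' z - f z‖ ≤ e / 2
  cover : f '' closedBall 0 t ⊆ f' '' closedBall 0 r'
  grow : ∃ ρ y q, 0 < ρ ∧
    (∀ x, x ∉ f '' closedBall 0 t → closedBall x (infDist x (f '' closedBall 0 t)) ⊆ U →
      infDist x (f '' closedBall 0 t) ≤ 2 * ρ) ∧
    (∀ p ∈ f' '' closedBall 0 t', ∃ p' ∈ f '' closedBall 0 t ∪ closedBall y ρ,
      dist p p' ≤ e ∧ dist p p' ≤ ρ) ∧
    closedBall q (ρ / 240) ⊆ f' '' closedBall 0 t' ∧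
    Disjoint (closedBall q (ρ / 240)) (f '' closedBall 0 t)

/-- One step of the construction: a ball in `U` touching the current image, of almost the largest
possible radius `ρ`, is used to enlarge the image. -/
theorem exists_next [Nontrivial E] (μ : Measure E) [IsFiniteMeasureOnCompacts μ] {U : Set E}
    (hUo : IsOpen U) (hUb : Bornology.IsBounded U) {k : ℕ} {f : E → E} {r t e : ℝ}
    (hS : Stage U μ k f r t e) :
    ∃ f' r' t' e', Stage U μ (k + 1) f' r' t' e' ∧ Next U f t e f' r' t' e' := by
  have : ProperSpace E := FiniteDimensional.proper ℂ E
  have : NoncompactSpace E := NormedSpace.noncompactSpace ℂ E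
  let _ : NormedSpace ℝ E := NormedSpace.restrictScalars ℝ ℂ E
  have ht0 : 0 < t := hS.r_pos.trans hS.r_lt
  have hTc : IsCompact (f '' closedBall 0 t) := hS.good.isCompact_image
  have hTne : (f '' closedBall 0 t).Nonempty := ⟨f 0, mem_image_of_mem f (mem_closedBall_self ht0.le)⟩
  have hTU := hS.sub
  set T := f '' closedBall 0 t with hT
  have hpos : ∀ x, x ∉ T → 0 < infDist x T := fun x hx =>
    (hTc.isClosed.notMem_iff_infDist_pos hTne).1 hx
  set N : Set E := {x | x ∉ T ∧ closedBall x (infDist x T) ⊆ U} with hN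
  -- `T` is compact, hence not open, so points outside `T` accumulate at `T`.
  have hNne : N.Nonempty := by
    obtain ⟨δ, hδ, hδU⟩ := hTc.exists_thickening_subset_open hUo hTU
    have hnot : ¬ IsOpen T := by
      intro ho
      have : T = univ := IsClopen.eq_univ ⟨hTc.isClosed, ho⟩ hTne
      exact noncompact_univ E (this ▸ hTc)
    rw [Metric.isOpen_iff] at hnot
    push Not at hnot
    obtain ⟨x, hx, hxn⟩ := hnot
    obtain ⟨y, hy, hyT⟩ := not_subset.1 (hxn (δ / 2) (by positivity))
    refine ⟨y, hyT, fun p hp => hδU (mem_thickening_iff.2 ⟨x, hx, ?_⟩)⟩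
    rw [mem_ball] at hy
    rw [mem_closedBall] at hp
    have h1 : infDist y T ≤ dist y x := infDist_le_dist_of_mem hx
    have h2 := dist_triangle p y x
    linarith
  have hNbdd : BddAbove ((fun x => infDist x T) '' N) := by
    refine ⟨diam U, ?_⟩
    rintro _ ⟨x, hx, rfl⟩
    obtain ⟨p, hp⟩ := hTne
    exact (infDist_le_dist_of_mem hp).trans
      (dist_le_diam_of_mem hUb (hx.2 (mem_closedBall_self infDist_nonneg)) (hTU hp))
  obtain ⟨y, hyN, hymax⟩ : ∃ y ∈ N, ∀ x ∈ N, infDist x T ≤ 2 * infDist y T := by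
    obtain ⟨x₀, hx₀⟩ := hNne
    have hsup : 0 < sSup ((fun x => infDist x T) '' N) :=
      (hpos x₀ hx₀.1).trans_le (le_csSup hNbdd (mem_image_of_mem _ hx₀))
    obtain ⟨_, ⟨y, hy, rfl⟩, hlt⟩ := exists_lt_of_lt_csSup
      (Set.Nonempty.image _ ⟨x₀, hx₀⟩) (half_lt_self hsup)
    exact ⟨y, hy, fun x hx => by
      have := le_csSup hNbdd (mem_image_of_mem (fun x => infDist x T) hx)
      simp only at this hlt
      linarith⟩
  obtain ⟨ρ, hρ⟩ : ∃ ρ, infDist y T = ρ := ⟨_, rfl⟩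
  have hρ0 : 0 < ρ := hρ ▸ hpos y hyN.1
  have hyU : closedBall y ρ ⊆ U := hρ ▸ hyN.2
  obtain ⟨δ, hδ, hδU⟩ := (hTc.union (isCompact_closedBall y ρ)).exists_thickening_subset_open hUo
    (union_subset hTU hyU)
  have he0 := hS.e_pos
  have hm : 0 < min δ (min e ρ) := by positivity
  obtain ⟨r', g, htr, hr1, hg, hgf, hcov, hnear, q, hq, hqd⟩ :=
    core_step ht0 hS.t_lt hS.good hρ hρ0 (half_pos hm)
  have hOU : thickening (min δ (min e ρ)) (T ∪ closedBall y ρ) ⊆ U :=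
    (thickening_mono (min_le_left _ _) _).trans hδU
  have hgO : g '' closedBall 0 r' ⊆ thickening (min δ (min e ρ)) (T ∪ closedBall y ρ) := by
    rintro _ ⟨z, hz, rfl⟩
    obtain ⟨p, hp, hd⟩ := hnear z (mem_closedBall_zero_iff.1 hz)
    refine mem_thickening_iff.2 ⟨p, hp, ?_⟩
    rw [dist_eq_norm]
    linarith
  obtain ⟨t', e', he', htO, hS'⟩ := exists_stage μ (k + 1) (ht0.trans htr) hr1 hg
    isOpen_thickening hOU hUo hgO (half_pos he0)
  have hme : min δ (min e ρ) ≤ e := (min_le_right _ _).trans (min_le_left _ _)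
  have hmρ : min δ (min e ρ) ≤ ρ := (min_le_right _ _).trans (min_le_right _ _)
  refine ⟨g, r', t', e', hS', htr, he', fun z hz => (hgf z hz).trans (by linarith), hcov,
    ρ, y, q, hρ0, fun x hx hxU => hρ ▸ hymax x ⟨hx, hxU⟩, fun p hp => ?_,
    hq.trans (image_mono (closedBall_subset_closedBall hS'.r_lt.le)), hqd⟩
  obtain ⟨p', hp', hd⟩ := mem_thickening_iff.1 (htO hp)
  exact ⟨p', hp', by linarith, by linarith⟩

/-- A small affine copy of the ball inside `U`. -/
theorem exists_initial (μ : Measure E) [IsFiniteMeasureOnCompacts μ] {U : Set E}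
    (hUo : IsOpen U) (hUne : U.Nonempty) : ∃ f r t e, Stage U μ 0 f r t e := by
  obtain ⟨x, hx⟩ := hUne
  obtain ⟨b, hb, hbU⟩ := Metric.isOpen_iff.1 hUo x hx
  have hgood : Good (fun z : E => x + (b : ℂ) • z) (1 / 2) := by
    refine ⟨1, by norm_num, ?_, b, hb, ?_⟩
    · exact fun z _ => (analyticAt_const).add (analyticAt_const.smul analyticAt_id)
    · intro z _ w _
      rw [add_sub_add_left_eq_sub, ← smul_sub, norm_smul, Complex.norm_real,
        Real.norm_of_nonneg hb.le]
  have himg : (fun z : E => x + (b : ℂ) • z) '' closedBall 0 (1 / 2) ⊆ U := by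
    rintro _ ⟨z, hz, rfl⟩
    rw [mem_closedBall_zero_iff] at hz
    refine hbU ?_
    rw [mem_ball, dist_eq_norm, add_sub_cancel_left, norm_smul, Complex.norm_real,
      Real.norm_of_nonneg hb.le]
    nlinarith
  obtain ⟨t, e, -, -, hS⟩ := exists_stage μ 0 (by norm_num) (by norm_num) hgood hUo Subset.rfl hUo
    himg one_pos
  exact ⟨_, _, t, e, hS⟩

/-- The main result for a complex inner product space of positive finite dimension and any Haar
measure. -/
theorem exists_ball_filling [Nontrivial E] (μ : Measure E) [μ.IsAddHaarMeasure] {U : Set E}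
    (hUo : IsOpen U) (hUc : IsConnected U) (hUb : Bornology.IsBounded U) :
    ∃ G : E → E, DifferentiableOn ℂ G (ball 0 1) ∧ InjOn G (ball 0 1) ∧ G '' ball 0 1 ⊆ U ∧
      μ (U \ G '' ball 0 1) = 0 := by
  let _ : NormedSpace ℝ E := NormedSpace.restrictScalars ℝ ℂ E
  have : FiniteDimensional ℝ E := FiniteDimensional.complexToReal E
  obtain ⟨f₀, r₀, t₀, e₀, hS₀⟩ := exists_initial μ hUo hUc.nonempty
  let P : ℕ → (E → E) × ℝ × ℝ × ℝ → Prop := fun k s => Stage U μ k s.1 s.2.1 s.2.2.1 s.2.2.2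
  have hnext : ∀ k (s : {s // P k s}), ∃ s' : {s // P (k + 1) s},
      Next U s.1.1 s.1.2.2.1 s.1.2.2.2 s'.1.1 s'.1.2.1 s'.1.2.2.1 s'.1.2.2.2 := fun k s => by
    obtain ⟨f', r', t', e', h', h⟩ := exists_next μ hUo hUb s.2
    exact ⟨⟨(f', r', t', e'), h'⟩, h⟩
  choose nxt hnxt using hnext
  let s : ∀ k, {s // P k s} := fun k => Nat.rec ⟨(f₀, r₀, t₀, e₀), hS₀⟩ (fun k s => nxt k s) k
  obtain ⟨f, r, t, e, hS, hN⟩ : ∃ (f : ℕ → E → E) (r t e : ℕ → ℝ),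
      (∀ k, Stage U μ k (f k) (r k) (t k) (e k)) ∧
      ∀ k, Next U (f k) (t k) (e k) (f (k + 1)) (r (k + 1)) (t (k + 1)) (e (k + 1)) :=
    ⟨fun k => (s k).1.1, fun k => (s k).1.2.1, fun k => (s k).1.2.2.1, fun k => (s k).1.2.2.2,
      fun k => (s k).2, fun k => hnxt k (s k)⟩
  obtain ⟨G, hGd, hGi, hGU, hGc⟩ := exists_limit (U := U) (f := f) (fun k => (hS k).r_pos)
    (fun k => (hS k).r_lt) (fun k => (hN k).t_lt) (fun k => (hS k).t_lt)
    (fun k => (hS k).good.differentiableOn.mono ball_subset_closedBall)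
    (fun k => (hS k).e_pos) (fun k => (hN k).e_le) (fun k => (hN k).close)
    (fun k => (hS k).stable)
  refine ⟨G, hGd, hGi, hGU, ?_⟩
  choose ρ y q hρ hmax hnear hq hqd using fun k => (hN k).grow
  have hT0 : ∀ k, 0 < t k := fun k => (hS k).r_pos.trans (hS k).r_lt
  have hzero := measure_diff_iUnion_eq_zero μ hUo hUc hUb
    (T := fun k => f k '' closedBall 0 (t k))
    (fun k => ⟨f k 0, mem_image_of_mem (f k) (mem_closedBall_self (hT0 k).le)⟩)
    (fun k => (hS k).good.isCompact_image)
    (fun k => (hN k).cover.trans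
      (image_mono (closedBall_subset_closedBall (hS (k + 1)).r_lt.le)))
    (fun k => (hS k).sub) (fun k => (hN k).e_le) (fun k => (hS k).shell) hρ hmax hnear hq hqd
  refine measure_mono_null (sdiff_subset_sdiff_right (iUnion_subset fun k => ?_)) hzero
  exact (hN k).cover.trans (hGc (k + 1))

end Iteration

end BallFill

/-- **Theorem 1.4** (for bounded connected open sets `U ⊆ ℂ^m`). There is an injective
holomorphic map `F` from the unit ball of `ℂ^m` into `U` whose image has full measure in
`U`, i.e. `U \ F(B^m(0,1))` has Lebesgue measure zero. -/
theorem exists_injective_holomorphic_ball_full_measure {m : ℕ}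
    (U : Set (EuclideanSpace ℂ (Fin m)))
    (hUopen : IsOpen U) (hUconn : IsConnected U) (hUbdd : Bornology.IsBounded U) :
    ∃ F : EuclideanSpace ℂ (Fin m) → EuclideanSpace ℂ (Fin m),
      DifferentiableOn ℂ F (ball 0 1) ∧ Set.InjOn F (ball 0 1) ∧
      F '' ball 0 1 ⊆ U ∧ volume (U \ F '' ball 0 1) = 0 := by
  rcases Nat.eq_zero_or_pos m with rfl | hm
  · -- `ℂ^0` is a point, so the nonempty set `U` is the whole space.
    have hU : U = Set.univ := Subsingleton.eq_univ_of_nonempty hUconn.nonempty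
    have hb : ball (0 : EuclideanSpace ℂ (Fin 0)) 1 = Set.univ :=
      Subsingleton.eq_univ_of_nonempty ⟨0, mem_ball_self one_pos⟩
    exact ⟨id, differentiableOn_id, Set.injOn_id _, by simp [hU], by simp [hb]⟩
  · have : Nonempty (Fin m) := ⟨⟨0, hm⟩⟩
    have : (volume : Measure (EuclideanSpace ℂ (Fin m))).IsAddHaarMeasure := inferInstance
    exact BallFill.exists_ball_filling volume hUopen hUconn hUbdd
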